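/- arXiv:math/0508573 — 2 statements merged into one kernel-verified Lean document; each statement's English description precedes it below -/
import Mathlib

section
/- Let n ≥ 1, J ⊆ {1,…,n}, σ_{ij} ∈ {1,−1}, and let q = |J|. Regard ℂ as an A_{J,σ}-module via the augmentation sending each generator v_i to 0. Then for every m ≥ 0, dim_ℂ Ext^m_{A_{J,σ}}(ℂ,ℂ) equals the number of functions a : {1,…,n} → ℕ with a_1 + ⋯ + a_n = m and a_i ≤ 1 for every i ∉ J; equivalently, the Poincaré series Σ_{m≥0} dim_ℂ Ext^m_{A_{J,σ}}(ℂ,ℂ) z^m equals (1+z)^{n−q}/(1−z)^{q}. In particular, ⊕_{m≥0} Ext^m_{A_{J,σ}}(ℂ,ℂ) is finite-dimensional if and only if J = ∅. -/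
open CategoryTheory FreeAlgebra DirectSum

/-- The defining relations of the algebra `A_{J,σ}`: `v_i v_j = σ_{ij} v_j v_i` for `i < j`,
and `v_i² = 0` for `i ∈ J`. -/
def colorRel (n : ℕ) (J : Finset (Fin n)) (σ : Fin n → Fin n → ℂ) :
    FreeAlgebra ℂ (Fin n) → FreeAlgebra ℂ (Fin n) → Prop := fun x y =>
  (∃ i j : Fin n, i < j ∧ x = ι ℂ i * ι ℂ j ∧ y = σ i j • (ι ℂ j * ι ℂ i)) ∨
  (∃ i ∈ J, x = ι ℂ i * ι ℂ i ∧ y = 0)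

/-- `Ext^m_R(ℂ,ℂ)` as a ℂ-module, where `ℂ` is an `R`-module via the augmentation `ε`. -/
noncomputable def extC (R : Type) [Ring R] [Algebra ℂ R] (ε : R →ₐ[ℂ] ℂ) (m : ℕ) :
    ModuleCat ℂ :=
  letI : Module R ℂ := Module.compHom ℂ ε.toRingHom
  ((Ext ℂ (ModuleCat R) m).obj (Opposite.op (ModuleCat.of R ℂ))).obj (ModuleCat.of R ℂ)

/-- `dim_ℂ Ext^m_R(ℂ,ℂ)`. -/
noncomputable def extDim (R : Type) [Ring R] [Algebra ℂ R] (ε : R →ₐ[ℂ] ℂ) (m : ℕ) : ℕ :=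
  Module.finrank ℂ (extC R ε m)


section homological

variable {R : Type} [Ring R] [Algebra ℂ R] [Module R ℂ]
  (E : ℕ → Type)
  (d : ∀ m, (E (m+1) →₀ R) →ₗ[R] (E m →₀ R))
  (aug : (E 0 →₀ R) →ₗ[R] ℂ)

/-- The chain complex of free modules attached to the differentials `d`. -/
noncomputable def resComplex (hdd : ∀ m x, d m (d (m+1) x) = 0) : ChainComplex (ModuleCat R) ℕ :=
  ChainComplex.of (fun m => ModuleCat.of R (E m →₀ R)) (fun m => ModuleCat.ofHom (d m))
    (fun m => ModuleCat.hom_ext (LinearMap.ext fun x => hdd m x))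

lemma resComplex_d (hdd : ∀ m x, d m (d (m+1) x) = 0) (m : ℕ) :
    (resComplex E d hdd).d (m+1) m = ModuleCat.ofHom (d m) :=
  ChainComplex.of_d (fun m => ModuleCat.of R (E m →₀ R)) (fun m => ModuleCat.ofHom (d m)) m

/-- The projective resolution attached to the differentials `d`. -/
noncomputable def resProj (hdd : ∀ m x, d m (d (m+1) x) = 0)
    (hex : ∀ m x, d m x = 0 → ∃ y, d (m+1) y = x)
    (haug : ∀ x, aug (d 0 x) = 0)
    (hex0 : ∀ x, aug x = 0 → ∃ y, d 0 y = x)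
    (hsurj : Function.Surjective aug) : ProjectiveResolution (ModuleCat.of R ℂ) where
  complex := resComplex E d hdd
  projective m := by
    change Projective (ModuleCat.of R (E m →₀ R))
    exact ModuleCat.projective_of_free (Finsupp.basisSingleOne)
  π := (ChainComplex.toSingle₀Equiv _ _).symm ⟨ModuleCat.ofHom aug, by
    rw [resComplex_d E d hdd 0]
    exact ModuleCat.hom_ext (LinearMap.ext fun x => haug x)⟩
  quasiIso := ⟨fun n => by
    cases n
    · rw [ChainComplex.quasiIsoAt₀_iff, ShortComplex.quasiIso_iff_of_zeros']
      · refine (ShortComplex.exact_and_epi_g_iff_of_iso (S₂ := ShortComplex.mk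
          (ModuleCat.ofHom (d 0)) (ModuleCat.ofHom aug)
          (ModuleCat.hom_ext (LinearMap.ext fun x => haug x))) ?_).2 ⟨?_, ?_⟩
        · refine ShortComplex.isoMk (Iso.refl _) (Iso.refl _) (Iso.refl _) ?_ ?_
          · exact (Category.id_comp _).trans
              ((resComplex_d E d hdd 0).symm.trans (Category.comp_id _).symm)
          · refine (Category.id_comp _).trans (Eq.trans ?_ (Category.comp_id _).symm)
            exact (ChainComplex.toSingle₀Equiv_symm_apply_f_zero (C := resComplex E d hdd)
              (X := ModuleCat.of R ℂ) (ModuleCat.ofHom aug) _).symm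
        · rw [ShortComplex.moduleCat_exact_iff]
          exact hex0
        · rw [ModuleCat.epi_iff_surjective]
          exact hsurj
      · exact (resComplex E d hdd).shape 0 0 (by simp)
      · rfl
      · rfl
    · rename_i n
      rw [quasiIsoAt_iff_exactAt']
      · rw [HomologicalComplex.exactAt_iff' _ (n + 1 + 1) (n + 1) n (by simp) (by simp)]
        rw [ShortComplex.moduleCat_exact_iff]
        change ∀ x, (resComplex E d hdd).d (n+1) n x = 0 →
          ∃ y, (resComplex E d hdd).d (n+1+1) (n+1) y = x
        rw [resComplex_d, resComplex_d]
        exact hex n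
      · apply ChainComplex.exactAt_succ_single_obj⟩

/-- If a cochain complex has zero differentials around `m`, its homology is the module. -/
lemma homology_of_zero {K : CochainComplex (ModuleCat ℂ) ℕ} (m : ℕ)
    (h : ∀ i j, K.d i j = 0) : Nonempty (K.homology m ≅ K.X m) := by
  let S := K.sc m
  exact ⟨(ShortComplex.HomologyData.ofZeros S (h _ _) (h _ _)).left.homologyIso⟩

theorem ext_equiv (ε : R →ₐ[ℂ] ℂ) 
    (hmod : ∀ (r : R) (z : ℂ), r • z = ε r * z)
    (hdd : ∀ m x, d m (d (m+1) x) = 0)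
    (hex : ∀ m x, d m x = 0 → ∃ y, d (m+1) y = x)
    (haug : ∀ x, aug (d 0 x) = 0)
    (hex0 : ∀ x, aug x = 0 → ∃ y, d 0 y = x)
    (hsurj : Function.Surjective aug)
    (hmin : ∀ m a e, ε (d m (Finsupp.single a 1) e) = 0) (m : ℕ) :
    Nonempty (((Ext ℂ (ModuleCat R) m).obj (Opposite.op (ModuleCat.of R ℂ))).obj
      (ModuleCat.of R ℂ) ≃ₗ[ℂ] (E m → ℂ)) := by
  let P := resProj E d aug hdd hex haug hex0 hsurj
  have hz : ∀ i j, (P.complex.linearYonedaObj ℂ (ModuleCat.of R ℂ)).d i j = 0 := by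
    intro i j
    by_cases hij : i + 1 = j
    · subst hij
      ext f : 2
      change (resComplex E d hdd).d (i+1) i ≫ f = 0
      rw [resComplex_d]
      change (ModuleCat.of R (E i →₀ R)) ⟶ ModuleCat.of R ℂ at f
      refine ModuleCat.hom_ext ?_
      refine Finsupp.lhom_ext' fun a => LinearMap.ext_ring ?_
      change f.hom (d i (Finsupp.single a 1)) = 0
      rw [← Finsupp.sum_single (d i (Finsupp.single a 1)), Finsupp.sum, map_sum]
      refine Finset.sum_eq_zero fun e _ => ?_
      rw [← mul_one (d i (Finsupp.single a 1) e), ← smul_eq_mul, ← Finsupp.smul_single, map_smul]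
      exact (hmod _ _).trans (by rw [hmin, zero_mul])
    · exact HomologicalComplex.shape _ _ _ (by simpa using hij)
  obtain ⟨e⟩ := homology_of_zero m hz
  let e2 := (P.isoExt (R := ℂ) m (ModuleCat.of R ℂ) ≪≫ e).toLinearEquiv
  have alg : ∀ (c z : ℂ), (algebraMap ℂ R c) • z = c * z := fun c z => by
    rw [hmod, AlgHom.commutes]; rfl
  let e3 : (ModuleCat.of R (E m →₀ R) ⟶ ModuleCat.of R ℂ) ≃ₗ[ℂ] (E m → ℂ) :=
    { toFun := fun f a => f.hom (Finsupp.single a 1)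
      map_add' := fun f g => rfl
      map_smul' := fun c f => funext fun a => alg c (f.hom (Finsupp.single a 1))
      invFun := fun g => ModuleCat.ofHom (Finsupp.lsum ℕ fun a => LinearMap.toSpanSingleton R ℂ (g a))
      left_inv := fun f => ModuleCat.hom_ext (by
        refine Finsupp.lhom_ext' fun a => LinearMap.ext_ring ?_
        simp)
      right_inv := fun g => funext fun a => by simp }
  exact ⟨e2.trans e3⟩

end homological

section monomials

/-- The sign picked up on the left. -/
noncomputable def sL {n : ℕ} (g : Fin n → Fin n → ℂ) (b : Fin n → ℕ) (i : Fin n) : ℂ :=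
  ∏ k, if k < i then g k i ^ b k else 1

/-- The sign picked up on the right. -/
noncomputable def sR {n : ℕ} (g : Fin n → Fin n → ℂ) (b : Fin n → ℕ) (i : Fin n) : ℂ :=
  ∏ k, if i < k then g i k ^ b k else 1

lemma sL_add {n : ℕ} (g : Fin n → Fin n → ℂ) (b : Fin n → ℕ) (i j : Fin n) :
    sL g (b + Pi.single j 1) i = sL g b i * (if j < i then g j i else 1) := by
  have : (if j < i then g j i else 1) = ∏ k, if k = j then (if j < i then g j i else 1) else 1 := by
    simp
  rw [this, sL, sL, ← Finset.prod_mul_distrib]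
  refine Finset.prod_congr rfl fun k _ => ?_
  by_cases hk : k = j
  · subst hk
    by_cases h : k < i <;> simp [h, pow_succ]
  · simp [hk]

lemma sR_add {n : ℕ} (g : Fin n → Fin n → ℂ) (b : Fin n → ℕ) (i j : Fin n) :
    sR g (b + Pi.single j 1) i = sR g b i * (if i < j then g i j else 1) := by
  have : (if i < j then g i j else 1) = ∏ k, if k = j then (if i < j then g i j else 1) else 1 := by
    simp
  rw [this, sR, sR, ← Finset.prod_mul_distrib]
  refine Finset.prod_congr rfl fun k _ => ?_
  by_cases hk : k = j
  · subst hk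
    by_cases h : i < k <;> simp [h, pow_succ]
  · simp [hk]

lemma sL_sq {n : ℕ} (g : Fin n → Fin n → ℂ) (hg : ∀ i j, g i j * g i j = 1)
    (b : Fin n → ℕ) (i : Fin n) : sL g b i * sL g b i = 1 := by
  rw [sL, ← Finset.prod_mul_distrib]
  refine Finset.prod_eq_one fun k _ => ?_
  split_ifs
  · rw [← mul_pow, hg, one_pow]
  · simp

lemma sR_sq {n : ℕ} (g : Fin n → Fin n → ℂ) (hg : ∀ i j, g i j * g i j = 1)
    (b : Fin n → ℕ) (i : Fin n) : sR g b i * sR g b i = 1 := by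
  rw [sR, ← Finset.prod_mul_distrib]
  refine Finset.prod_eq_one fun k _ => ?_
  split_ifs
  · rw [← mul_pow, hg, one_pow]
  · simp

variable {A : Type} [Ring A] [Algebra ℂ A]

/-- Ordered monomials. -/
def mon {n : ℕ} (v : Fin n → A) (b : Fin n → ℕ) : A := (List.ofFn fun i => v i ^ b i).prod

lemma mon_succ {n : ℕ} (v : Fin (n+1) → A) (b : Fin (n+1) → ℕ) :
    mon v b = v 0 ^ b 0 * mon (fun i => v i.succ) (fun i => b i.succ) := by
  simp [mon, List.ofFn_succ]

lemma mon_zero {n : ℕ} (v : Fin n → A) : mon v 0 = 1 := by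
  simp [mon]

lemma pow_mul_comm_of {x y : A} {t : ℂ} (h : x * y = t • (y * x)) (k : ℕ) :
    x * y ^ k = t ^ k • (y ^ k * x) := by
  induction k with
  | zero => simp
  | succ k ih =>
    rw [pow_succ, ← mul_assoc, ih, smul_mul_assoc, mul_assoc, h, mul_smul_comm, smul_smul,
      ← mul_assoc, pow_succ]

lemma pow_mul_comm_of' {x y : A} {t : ℂ} (h : x * y = t • (y * x)) (k : ℕ) :
    x ^ k * y = t ^ k • (y * x ^ k) := by
  induction k with
  | zero => simp
  | succ k ih =>
    rw [pow_succ, mul_assoc, h, mul_smul_comm, ← mul_assoc, ih, smul_mul_assoc, smul_smul,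
      mul_assoc, pow_succ, mul_comm]

lemma mon_comm {n : ℕ} (v : Fin n → A) (b : Fin n → ℕ) (x : A) (τ : Fin n → ℂ)
    (h : ∀ k, v k * x = τ k • (x * v k)) :
    mon v b * x = (∏ k, τ k ^ b k) • (x * mon v b) := by
  induction n with
  | zero => simp [mon]
  | succ n ih =>
    rw [mon_succ, mul_assoc, ih _ _ (fun k => τ k.succ) (fun k => h k.succ), mul_smul_comm,
      ← mul_assoc, pow_mul_comm_of' (h 0), smul_mul_assoc, smul_smul, Fin.prod_univ_succ,
      mul_assoc, mul_comm]

lemma mul_mon {n : ℕ} (v : Fin n → A) (g : Fin n → Fin n → ℂ)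
    (h : ∀ i j, i < j → v j * v i = g i j • (v i * v j)) (b : Fin n → ℕ) (i : Fin n) :
    v i * mon v b = sL g b i • mon v (b + Pi.single i 1) := by
  induction n with
  | zero => exact i.elim0
  | succ n ih =>
    rw [mon_succ, mon_succ]
    refine Fin.cases ?_ (fun i => ?_) i
    · rw [← mul_assoc, ← pow_succ']
      simp [sL]
    · rw [← mul_assoc, pow_mul_comm_of (h 0 i.succ (Fin.succ_pos i)), smul_mul_assoc, mul_assoc,
        ih (fun i => v i.succ) (fun i j => g i.succ j.succ)
          (fun i j hij => h _ _ (Fin.succ_lt_succ_iff.2 hij)), mul_smul_comm, smul_smul]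
      have e1 : (b + Pi.single i.succ 1 : Fin (n+1) → ℕ) 0 = b 0 := by simp [(Fin.succ_ne_zero i).symm]
      have e2 : (fun k : Fin n => (b + Pi.single i.succ 1 : Fin (n+1) → ℕ) k.succ) =
          (fun k => b k.succ) + Pi.single i 1 := by
        ext k
        simp [Pi.single_apply]
      rw [e1, e2]
      congr 1
      simp [sL, Fin.prod_univ_succ]

lemma mon_mul {n : ℕ} (v : Fin n → A) (g : Fin n → Fin n → ℂ)
    (h : ∀ i j, i < j → v j * v i = g i j • (v i * v j)) (b : Fin n → ℕ) (i : Fin n) :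
    mon v b * v i = sR g b i • mon v (b + Pi.single i 1) := by
  induction n with
  | zero => exact i.elim0
  | succ n ih =>
    rw [mon_succ, mon_succ]
    refine Fin.cases ?_ (fun i => ?_) i
    · rw [mul_assoc, mon_comm _ _ _ (fun k => g 0 k.succ) (fun k => h 0 k.succ (Fin.succ_pos k)),
        mul_smul_comm, ← mul_assoc, ← pow_succ]
      simp [sR, Fin.prod_univ_succ]
    · rw [mul_assoc, 
        ih (fun i => v i.succ) (fun i j => g i.succ j.succ)
          (fun i j hij => h _ _ (Fin.succ_lt_succ_iff.2 hij)), mul_smul_comm]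
      have e1 : (b + Pi.single i.succ 1 : Fin (n+1) → ℕ) 0 = b 0 := by simp [(Fin.succ_ne_zero i).symm]
      have e2 : (fun k : Fin n => (b + Pi.single i.succ 1 : Fin (n+1) → ℕ) k.succ) =
          (fun k => b k.succ) + Pi.single i 1 := by
        ext k
        simp [Pi.single_apply]
      rw [e1, e2]
      congr 1
      simp [sR, Fin.prod_univ_succ]

lemma mon_eq_zero {n : ℕ} (v : Fin n → A) (b : Fin n → ℕ) (i : Fin n) (h : v i * v i = 0)
    (hb : 1 < b i) : mon v b = 0 := by
  refine List.prod_eq_zero ?_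
  rw [List.mem_ofFn]
  refine ⟨i, ?_⟩
  obtain ⟨k, hk⟩ := Nat.exists_eq_add_of_lt hb
  change v i ^ b i = 0
  rw [hk, show 1 + k + 1 = 2 + k by ring, pow_add, pow_two, h, zero_mul]

lemma sub_add_single {n : ℕ} (b : Fin n → ℕ) (i : Fin n) (hb : 0 < b i) :
    b - Pi.single i 1 + Pi.single i 1 = b := by
  ext k
  by_cases h : k = i
  · subst h; simp; omega
  · simp [h]

end monomials
section pbw

variable {n : ℕ} (J : Finset (Fin n)) (σ : Fin n → Fin n → ℂ)

/-- Exponents of nonzero monomials of the algebra. -/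
abbrev BIdx (J : Finset (Fin n)) : Type := {b : Fin n → ℕ // ∀ i ∈ J, b i ≤ 1}

open Classical in
/-- Basis vector, or zero for a forbidden exponent. -/
noncomputable def bvec (b : Fin n → ℕ) : BIdx J →₀ ℂ :=
  if h : ∀ i ∈ J, b i ≤ 1 then Finsupp.single ⟨b, h⟩ 1 else 0

lemma bvec_of_not {b : Fin n → ℕ} {i : Fin n} (hi : i ∈ J) (hb : 1 < b i) : bvec J b = 0 := by
  rw [bvec, dif_neg]
  intro h
  have := h i hi
  omega

lemma bvec_coe (b : BIdx J) : bvec J b.1 = Finsupp.single b 1 := by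
  rw [bvec, dif_pos b.2]

/-- The operator of left multiplication by a generator in the monomial model. -/
noncomputable def Vop (i : Fin n) : (BIdx J →₀ ℂ) →ₗ[ℂ] (BIdx J →₀ ℂ) :=
  Finsupp.linearCombination ℂ fun b => sL σ b.1 i • bvec J (b.1 + Pi.single i 1)

lemma Vop_bvec (i : Fin n) (b : Fin n → ℕ) :
    Vop J σ i (bvec J b) = sL σ b i • bvec J (b + Pi.single i 1) := by
  by_cases h : ∀ i ∈ J, b i ≤ 1
  · rw [bvec_coe J ⟨b, h⟩, Vop, Finsupp.linearCombination_single, one_smul]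
  · push Not at h
    obtain ⟨k, hk, hb⟩ := h
    rw [bvec_of_not J hk hb, bvec_of_not J hk, map_zero, smul_zero]
    simp only [Pi.add_apply]
    omega

/-- The generators of the algebra. -/
noncomputable def gen (i : Fin n) : RingQuot (colorRel n J σ) :=
  RingQuot.mkAlgHom ℂ (colorRel n J σ) (ι ℂ i)

lemma gen_comm (hσ : ∀ i j, σ i j * σ i j = 1) (i j : Fin n) (hij : i < j) :
    gen J σ j * gen J σ i = σ i j • (gen J σ i * gen J σ j) := by
  have := RingQuot.mkAlgHom_rel ℂ (s := colorRel n J σ) (Or.inl ⟨i, j, hij, rfl, rfl⟩)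
  rw [map_smul, map_mul, map_mul] at this
  change gen J σ i * gen J σ j = σ i j • (gen J σ j * gen J σ i) at this
  rw [this, smul_smul, hσ, one_smul]

lemma gen_sq (i : Fin n) (hi : i ∈ J) : gen J σ i * gen J σ i = 0 := by
  have := RingQuot.mkAlgHom_rel ℂ (s := colorRel n J σ) (Or.inr ⟨i, hi, rfl, rfl⟩)
  rw [map_mul, map_zero] at this
  exact this

/-- The representation of the algebra on the monomial model. -/
noncomputable def rep (hσ : ∀ i j, σ i j * σ i j = 1) : RingQuot (colorRel n J σ) →ₐ[ℂ] Module.End ℂ (BIdx J →₀ ℂ) :=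
  RingQuot.liftAlgHom ℂ ⟨FreeAlgebra.lift ℂ (Vop J σ), by
    rintro x y (⟨i, j, hij, rfl, rfl⟩ | ⟨i, hi, rfl, rfl⟩)
    · simp only [map_mul, map_smul, FreeAlgebra.lift_ι_apply]
      refine Finsupp.lhom_ext' fun b => LinearMap.ext_ring ?_
      simp only [LinearMap.comp_apply, Finsupp.lsingle_apply, ← bvec_coe, Module.End.mul_apply,
        LinearMap.smul_apply, Vop_bvec, map_smul, smul_smul]
      rw [sL_add, sL_add, if_neg (not_lt.2 hij.le), if_pos hij, add_right_comm]
      congr 1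
      linear_combination (-(sL σ b.1 j * sL σ b.1 i)) * hσ i j
    · simp only [map_mul, map_zero, FreeAlgebra.lift_ι_apply]
      refine Finsupp.lhom_ext' fun b => LinearMap.ext_ring ?_
      simp only [LinearMap.comp_apply, Finsupp.lsingle_apply, ← bvec_coe, Module.End.mul_apply,
        LinearMap.zero_apply, Vop_bvec, map_smul, smul_smul]
      rw [bvec_of_not J hi, smul_zero]
      simp⟩

lemma rep_gen (hσ : ∀ i j, σ i j * σ i j = 1) (i : Fin n) : rep J σ hσ (gen J σ i) = Vop J σ i := by
  rw [rep, gen, RingQuot.liftAlgHom_mkAlgHom_apply, FreeAlgebra.lift_ι_apply]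

/-- From the model to the algebra. -/
noncomputable def toAlg : (BIdx J →₀ ℂ) →ₗ[ℂ] RingQuot (colorRel n J σ) :=
  Finsupp.linearCombination ℂ fun b => mon (gen J σ) b.1

lemma toAlg_bvec (b : Fin n → ℕ) : toAlg J σ (bvec J b) = mon (gen J σ) b := by
  by_cases h : ∀ i ∈ J, b i ≤ 1
  · rw [bvec_coe J ⟨b, h⟩, toAlg, Finsupp.linearCombination_single, one_smul]
  · push Not at h
    obtain ⟨k, hk, hb⟩ := h
    rw [bvec_of_not J hk hb, map_zero, mon_eq_zero _ _ k (gen_sq J σ k hk) hb]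

lemma toAlg_Vop (hσ : ∀ i j, σ i j * σ i j = 1) (i : Fin n) (m : BIdx J →₀ ℂ) :
    toAlg J σ (Vop J σ i m) = gen J σ i * toAlg J σ m := by
  have : toAlg J σ ∘ₗ Vop J σ i = LinearMap.mulLeft ℂ (gen J σ i) ∘ₗ toAlg J σ := by
    refine Finsupp.lhom_ext' fun b => LinearMap.ext_ring ?_
    simp only [LinearMap.comp_apply, Finsupp.lsingle_apply, ← bvec_coe, Vop_bvec, map_smul,
      toAlg_bvec, LinearMap.mulLeft_apply]
    rw [mul_mon _ σ (gen_comm J σ hσ)]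
  exact LinearMap.congr_fun this m

lemma toAlg_rep (hσ : ∀ i j, σ i j * σ i j = 1) (x : RingQuot (colorRel n J σ)) :
    ∀ (m : BIdx J →₀ ℂ), toAlg J σ (rep J σ hσ x m) = x * toAlg J σ m := by
  obtain ⟨x, rfl⟩ := RingQuot.mkAlgHom_surjective ℂ (colorRel n J σ) x
  induction x using FreeAlgebra.induction with
  | grade0 r => intro m; simp [Algebra.smul_def]
  | grade1 i =>
    intro m
    have := toAlg_Vop J σ hσ i m
    rw [← rep_gen J σ hσ] at this
    exact this
  | mul a b ha hb => intro m; simp [ha, hb, mul_assoc]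
  | add a b ha hb => intro m; simp [ha, hb, add_mul]

lemma rep_mon (hσ : ∀ i j, σ i j * σ i j = 1) (k : ℕ) : ∀ (b : Fin n → ℕ), ∑ i, b i = k →
    rep J σ hσ (mon (gen J σ) b) (bvec J 0) = bvec J b := by
  induction k with
  | zero =>
    intro b hb
    have : b = 0 := by
      ext i
      simpa using (Finset.sum_eq_zero_iff.1 hb) i (Finset.mem_univ i)
    subst this
    rw [mon_zero, map_one]; rfl
  | succ k ih =>
    intro b hb
    obtain ⟨i, hi⟩ : ∃ i, 0 < b i := by
      by_contra! h
      have : ∑ i, b i = 0 := Finset.sum_eq_zero fun i _ => by simpa using h i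
      omega
    have hb' := sub_add_single b i hi
    set b' := b - Pi.single i 1
    have hs : ∑ i, b' i = k := by
      rw [← hb'] at hb
      simp [Finset.sum_add_distrib] at hb
      exact hb
    have h1 := mul_mon _ σ (gen_comm J σ hσ) b' i
    have h2 := congrArg (fun x => rep J σ hσ x (bvec J 0)) h1
    simp only [map_mul, map_smul, Module.End.mul_apply, LinearMap.smul_apply] at h2
    rw [ih _ hs, rep_gen, Vop_bvec, hb'] at h2
    have h3 := congrArg (fun x => sL σ b' i • x) h2
    simp only [smul_smul, sL_sq σ hσ, one_smul] at h3
    exact h3.symm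

/-- PBW isomorphism. -/
noncomputable def pbwEquiv (hσ : ∀ i j, σ i j * σ i j = 1) :
    RingQuot (colorRel n J σ) ≃ₗ[ℂ] (BIdx J →₀ ℂ) where
  toFun x := rep J σ hσ x (bvec J 0)
  map_add' x y := by simp
  map_smul' c x := by simp
  invFun := toAlg J σ
  left_inv x := by
    change toAlg J σ (rep J σ hσ x (bvec J 0)) = x
    rw [toAlg_rep J σ hσ, toAlg_bvec, mon_zero, mul_one]
  right_inv m := by
    have : (LinearMap.applyₗ (bvec J 0)) ∘ₗ (rep J σ hσ).toLinearMap ∘ₗ toAlg J σ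
        = LinearMap.id := by
      refine Finsupp.lhom_ext' fun b => LinearMap.ext_ring ?_
      simp only [LinearMap.comp_apply, Finsupp.lsingle_apply, ← bvec_coe, toAlg_bvec]
      exact rep_mon J σ hσ _ _ rfl
    exact LinearMap.congr_fun this m

/-- PBW basis. -/
noncomputable def pbwBasis (hσ : ∀ i j, σ i j * σ i j = 1) :
    Module.Basis (BIdx J) ℂ (RingQuot (colorRel n J σ)) := Module.Basis.ofRepr (pbwEquiv J σ hσ)

lemma pbwBasis_apply (hσ : ∀ i j, σ i j * σ i j = 1) (b : BIdx J) :
    pbwBasis J σ hσ b = mon (gen J σ) b.1 := by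
  rw [pbwBasis, Module.Basis.coe_ofRepr]
  change toAlg J σ (Finsupp.single b 1) = _
  rw [← bvec_coe, toAlg_bvec]

end pbw

section koszul

variable {n : ℕ} (J : Finset (Fin n)) {A : Type} [Ring A] [Algebra ℂ A]
  (v : Fin n → A) (g : Fin n → Fin n → ℂ)

/-- Index set of the free generators of the resolution in degree `m`. -/
abbrev EIdx (J : Finset (Fin n)) (m : ℕ) : Type :=
  {a : Fin n → ℕ // (∑ i, a i) = m ∧ ∀ i ∉ J, a i ≤ 1}

open Classical in
/-- Inclusion of the generator `a`, zero if `a` is not allowed. -/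
noncomputable def el (m : ℕ) (a : Fin n → ℕ) : A →ₗ[A] (EIdx J m →₀ A) :=
  if h : (∑ i, a i) = m ∧ ∀ i ∉ J, a i ≤ 1 then Finsupp.lsingle ⟨a, h⟩ else 0

lemma el_coe (m : ℕ) (a : EIdx J m) (x : A) : el J m a.1 x = Finsupp.single a x := by
  rw [el, dif_pos a.2]; rfl

lemma el_of_sum (m : ℕ) (a : Fin n → ℕ) (x : A) (h : (∑ i, a i) ≠ m) : el J m a x = 0 := by
  rw [el, dif_neg (fun h' => h h'.1)]; rfl

lemma el_of_not (m : ℕ) (a : Fin n → ℕ) (x : A) (i : Fin n) (hi : i ∉ J) (h : 1 < a i) :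
    el J m a x = 0 := by
  rw [el, dif_neg (fun h' => absurd (h'.2 i hi) (by omega))]; rfl

lemma el_smul (m : ℕ) (a : Fin n → ℕ) (c : ℂ) (x : A) : el J m a (c • x) = c • el J m a x :=
  LinearMap.map_smul_of_tower _ c x

/-- The differential. -/
noncomputable def dif (m : ℕ) : (EIdx J (m+1) →₀ A) →ₗ[A] (EIdx J m →₀ A) :=
  Finsupp.lsum ℕ fun a => ∑ i, sL (-g) a.1 i •
    (el J m (a.1 - Pi.single i 1) ∘ₗ LinearMap.toSpanSingleton A A (v i))

lemma dif_single (m : ℕ) (a : EIdx J (m+1)) (x : A) :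
    dif J v g m (Finsupp.single a x) =
      ∑ i, sL (-g) a.1 i • el J m (a.1 - Pi.single i 1) (x * v i) := by
  simp [dif]

lemma dif_el (m : ℕ) (a : Fin n → ℕ) (h : (∑ i, a i) = m+1 ∧ ∀ i ∉ J, a i ≤ 1) (x : A) :
    dif J v g m (el J (m+1) a x) =
      ∑ i, sL (-g) a i • el J m (a - Pi.single i 1) (x * v i) := by
  rw [el_coe J (m+1) ⟨a, h⟩, dif_single]

lemma sum_sub_single (a : Fin n → ℕ) (i : Fin n) (h : 0 < a i) :
    (∑ k, (a - Pi.single i 1 : Fin n → ℕ) k) + 1 = ∑ k, a k := by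
  conv_rhs => rw [← sub_add_single a i h]
  simp [Finset.sum_add_distrib]

lemma sum_add_single (a : Fin n → ℕ) (i : Fin n) :
    (∑ k, (a + Pi.single i 1 : Fin n → ℕ) k) = (∑ k, a k) + 1 := by
  simp [Finset.sum_add_distrib]

lemma sub_single_of_zero (a : Fin n → ℕ) (i : Fin n) (h : a i = 0) :
    a - Pi.single i 1 = a := by
  ext k
  by_cases hk : k = i
  · subst hk; simp [h]
  · simp [hk]

lemma sub_single_le (a : Fin n → ℕ) (i k : Fin n) : (a - Pi.single i 1 : Fin n → ℕ) k ≤ a k := by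
  simp

lemma dif_dif (hg : ∀ i j, g i j * g i j = 1)
    (hcomm : ∀ i j, i < j → v j * v i = g i j • (v i * v j))
    (hsq : ∀ i ∈ J, v i * v i = 0) (m : ℕ) (x) :
    dif J v g m (dif J v g (m+1) x) = 0 := by
  suffices h : dif J v g m ∘ₗ dif J v g (m+1) = 0 from LinearMap.congr_fun h x
  refine Finsupp.lhom_ext' fun a => LinearMap.ext fun x => ?_
  change dif J v g m (dif J v g (m+1) (Finsupp.single a x)) = 0
  obtain ⟨a, ha, hJ⟩ := a
  rw [dif_single, map_sum]
  let F : Fin n → Fin n → (EIdx J m →₀ A) := fun i j => if 0 < a i then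
    (sL (-g) a i * sL (-g) (a - Pi.single i 1) j) •
      el J m (a - Pi.single i 1 - Pi.single j 1) (x * v i * v j) else 0
  have hF : ∀ i, dif J v g m (sL (-g) a i • el J (m+1) (a - Pi.single i 1) (x * v i))
      = ∑ j, F i j := by
    intro i
    rw [LinearMap.map_smul_of_tower]
    by_cases hi : 0 < a i
    · have hs := sum_sub_single a i hi
      rw [dif_el J v g m _ ⟨by omega, fun k hk => (sub_single_le a i k).trans (hJ k hk)⟩,
        Finset.smul_sum]
      refine Finset.sum_congr rfl fun j _ => ?_
      simp only [F, if_pos hi, smul_smul]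
    · have h0 : a i = 0 := by omega
      rw [sub_single_of_zero a i h0, el_of_sum _ _ _ _ (by omega)]
      simp [F, hi]
  simp only [hF]
  have key : ∀ i j, i < j → F i j = - F j i := by
    intro i j hij
    simp only [F]
    by_cases hi : 0 < a i
    · by_cases hj : 0 < a j
      · rw [if_pos hi, if_pos hj]
        have e1 : a - Pi.single i 1 - Pi.single j 1 = a - Pi.single j 1 - Pi.single i 1 :=
          tsub_right_comm
        have c1 : sL (-g) a j = sL (-g) (a - Pi.single i 1) j * (- g i j) := by
          conv_lhs => rw [← sub_add_single a i hi, sL_add, if_pos hij]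
          rfl
        have c2 : sL (-g) a i = sL (-g) (a - Pi.single j 1) i := by
          conv_lhs => rw [← sub_add_single a j hj, sL_add, if_neg (not_lt.2 hij.le), mul_one]
        rw [e1, mul_assoc x (v j), hcomm i j hij, mul_smul_comm, el_smul, smul_smul, ← neg_smul,
          ← mul_assoc, c1, c2]
        congr 1
        linear_combination (- sL (-g) (a - Pi.single j 1) i * sL (-g) (a - Pi.single i 1) j) * hg i j
      · have hj0 : a j = 0 := by omega
        rw [if_neg hj, neg_zero, if_pos hi, sub_single_of_zero _ j, el_of_sum, smul_zero]
        · have := sum_sub_single a i hi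
          omega
        · have := sub_single_le a i j
          omega
    · rw [if_neg hi, zero_eq_neg]
      by_cases hj : 0 < a j
      · have hi0 : a i = 0 := by omega
        rw [if_pos hj, sub_single_of_zero _ i, el_of_sum, smul_zero]
        · have := sum_sub_single a j hj
          omega
        · have := sub_single_le a j i
          omega
      · rw [if_neg hj]
  have diag : ∀ i, F i i = 0 := by
    intro i
    simp only [F]
    split_ifs with hi
    · by_cases hiJ : i ∈ J
      · rw [mul_assoc, hsq i hiJ, mul_zero, map_zero, smul_zero]
      · rw [sub_single_of_zero (a - Pi.single i 1) i, el_of_sum, smul_zero]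
        · have := sum_sub_single a i hi
          omega
        · have := hJ i hiJ
          simp only [Pi.sub_apply, Pi.single_eq_same]
          omega
    · rfl
  have anti : ∀ i j, F i j = - F j i := by
    intro i j
    rcases lt_trichotomy i j with h | h | h
    · exact key i j h
    · subst h; rw [diag, neg_zero]
    · rw [key j i h, neg_neg]
  have hS : (∑ i, ∑ j, F i j) = - ∑ i, ∑ j, F i j := by
    conv_lhs => rw [Finset.sum_comm]
    simp only [← Finset.sum_neg_distrib]
    exact Finset.sum_congr rfl fun i _ => Finset.sum_congr rfl fun j _ => anti j i
  have h2 : (2 : ℂ) • (∑ i, ∑ j, F i j) = 0 := by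
    rw [two_smul]
    nth_rewrite 2 [hS]
    exact add_neg_cancel _
  exact (smul_eq_zero.1 h2).resolve_left two_ne_zero

/-- The combined sign. -/
noncomputable def tt (a b : Fin n → ℕ) (i : Fin n) : ℂ := sL (-g) a i * sR g b i

/-- Value of the homotopy on basis vectors; `idx` chooses a direction for each weight. -/
noncomputable def Hval (idx : (Fin n → ℕ) → Fin n) (m : ℕ) (a b : Fin n → ℕ) :
    (EIdx J (m+1) →₀ A) :=
  if 0 < b (idx (a + b)) then tt g a b (idx (a + b)) •
    el J (m+1) (a + Pi.single (idx (a + b)) 1) (mon v (b - Pi.single (idx (a + b)) 1)) else 0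

open Classical in
/-- Terms of the other half of the homotopy formula. -/
noncomputable def Yval (i : Fin n) (m : ℕ) (a b : Fin n → ℕ) (j : Fin n) : (EIdx J m →₀ A) :=
  if 0 < a j ∧ (∀ k ∈ J, (b + Pi.single j 1 : Fin n → ℕ) k ≤ 1) ∧
      0 < (b + Pi.single j 1 : Fin n → ℕ) i then
    (tt g a b j * tt g (a - Pi.single j 1) (b + Pi.single j 1) i) •
      el J m (a - Pi.single j 1 + Pi.single i 1) (mon v (b + Pi.single j 1 - Pi.single i 1)) else 0

lemma tt_cancel (a b : Fin n → ℕ) (i j : Fin n) (hij : i ≠ j) :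
    tt g (a + Pi.single j 1) (b + Pi.single i 1) i * tt g (a + Pi.single j 1 + Pi.single i 1) b j +
    tt g (a + Pi.single j 1) (b + Pi.single i 1) j * tt g a (b + Pi.single i 1 + Pi.single j 1) i
      = 0 := by
  simp only [tt, sL_add, sR_add]
  rcases lt_or_gt_of_ne hij with h | h
  · simp [h, not_lt.2 h.le]; ring
  · simp [h, not_lt.2 h.le]; ring

lemma tt_self (hg : ∀ i j, g i j * g i j = 1) (a b : Fin n → ℕ) (i : Fin n) :
    tt g a b i * tt g a b i = 1 := by
  have h1 := sL_sq (-g) (fun i j => by simpa using hg i j) a i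
  have h2 := sR_sq g hg b i
  rw [tt]
  linear_combination (sR g b i * sR g b i) * h1 + h2

lemma tt_add_left (a b : Fin n → ℕ) (i : Fin n) :
    tt g (a + Pi.single i 1) b i = tt g a b i := by
  simp [tt, sL_add]

lemma tt_add_right (a b : Fin n → ℕ) (i : Fin n) :
    tt g a (b + Pi.single i 1) i = tt g a b i := by
  simp [tt, sR_add]

lemma core (hg : ∀ i j, g i j * g i j = 1)
    (hcomm : ∀ i j, i < j → v j * v i = g i j • (v i * v j))
    (hsq : ∀ i ∈ J, v i * v i = 0) (idx : (Fin n → ℕ) → Fin n)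
    (hidx : ∀ w : Fin n → ℕ, w ≠ 0 → 0 < w (idx w)) (m : ℕ) (a b : Fin n → ℕ)
    (ha : (∑ i, a i) = m) (haJ : ∀ i ∉ J, a i ≤ 1) (hb : ∀ i ∈ J, b i ≤ 1) (hab : a + b ≠ 0) :
    dif J v g m (Hval J v g idx m a b) + ∑ j, Yval J v g (idx (a+b)) m a b j
      = el J m a (mon v b) := by
  classical
  have hi := hidx _ hab
  rw [Hval]
  generalize idx (a + b) = i at *
  rw [Pi.add_apply] at hi
  let X : Fin n → (EIdx J m →₀ A) := fun j =>
    if 0 < b i ∧ ∀ k ∉ J, (a + Pi.single i 1 : Fin n → ℕ) k ≤ 1 then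
    (tt g a b i * tt g (a + Pi.single i 1) (b - Pi.single i 1) j) •
      el J m (a + Pi.single i 1 - Pi.single j 1) (mon v (b - Pi.single i 1 + Pi.single j 1)) else 0
  have hX : dif J v g m (if 0 < b i then tt g a b i •
    el J (m+1) (a + Pi.single i 1) (mon v (b - Pi.single i 1)) else 0) = ∑ j, X j := by
    by_cases hbi : 0 < b i
    · by_cases hok : ∀ k ∉ J, (a + Pi.single i 1 : Fin n → ℕ) k ≤ 1
      · simp only [X, if_pos hbi, if_pos (And.intro hbi hok)]
        rw [LinearMap.map_smul_of_tower, dif_el J v g m _ ⟨by rw [sum_add_single, ha], hok⟩,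
          Finset.smul_sum]
        refine Finset.sum_congr rfl fun j _ => ?_
        rw [mon_mul v g hcomm, el_smul, smul_smul, smul_smul]
        congr 1
        rw [tt, tt]; ring
      · have : ∀ j, X j = 0 := fun j => if_neg fun h => hok h.2
        simp only [this, Finset.sum_const_zero, if_pos hbi]
        push Not at hok
        obtain ⟨k, hk, hk'⟩ := hok
        rw [el_of_not J _ _ _ k hk hk', smul_zero, map_zero]
    · have : ∀ j, X j = 0 := fun j => if_neg fun h => hbi h.1
      simp only [this, Finset.sum_const_zero, if_neg hbi, map_zero]
  rw [hX, ← Finset.sum_add_distrib]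
  have hXY : ∀ j, X j + Yval J v g i m a b j = if j = i then el J m a (mon v b) else 0 := by
    intro j
    by_cases hji : j = i
    · subst hji
      rw [if_pos rfl]
      simp only [X, Yval]
      have ea : a + Pi.single j 1 - Pi.single j 1 = a := add_tsub_cancel_right _ _
      have eb : b + Pi.single j 1 - Pi.single j 1 = b := add_tsub_cancel_right _ _
      rw [ea, eb]
      have hbJ : ∀ (_ : j ∈ J), b j ≤ 1 := hb j
      have haj : ∀ (_ : j ∉ J), a j ≤ 1 := haJ j
      have okA : (∀ k ∉ J, (a + Pi.single j 1 : Fin n → ℕ) k ≤ 1) ↔ (j ∈ J ∨ a j = 0) := by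
        constructor
        · intro h
          by_contra! hc
          have := h j hc.1
          simp at this
          omega
        · intro h k hk
          by_cases hkj : k = j
          · subst hkj
            simp [h.resolve_left hk]
          · simpa [hkj] using haJ k hk
      have okB : (∀ k ∈ J, (b + Pi.single j 1 : Fin n → ℕ) k ≤ 1) ↔ (j ∉ J ∨ b j = 0) := by
        constructor
        · intro h
          by_contra! hc
          have := h j hc.1
          simp at this
          omega
        · intro h k hk
          by_cases hkj : k = j
          · subst hkj
            simp [h.resolve_left (not_not.2 hk)]
          · simpa [hkj] using hb k hk
      by_cases hcase : 0 < b j ∧ ∀ k ∉ J, (a + Pi.single j 1 : Fin n → ℕ) k ≤ 1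
      · rw [if_pos hcase, if_neg, add_zero, sub_add_single b j hcase.1, tt_add_left]
        · rw [show tt g a (b - Pi.single j 1) j = tt g a b j by
            rw [← tt_add_right, sub_add_single b j hcase.1], tt_self g hg, one_smul]
        · rw [okA] at hcase
          rw [okB]
          rintro ⟨h1, h2, h3⟩
          by_cases hJ : j ∈ J
          · have := h2.resolve_left (not_not.2 hJ); omega
          · have := hcase.2.resolve_left hJ; omega
      · rw [if_neg hcase, if_pos, zero_add]
        · have h0 : 0 < a j := by
            rw [okA] at hcase
            by_contra h
            apply hcase
            constructor
            · omega
            · right; omega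
          rw [sub_add_single a j h0, tt_add_right]
          rw [show tt g (a - Pi.single j 1) b j = tt g a b j by
            rw [← tt_add_left, sub_add_single a j h0], tt_self g hg, one_smul]
        · rw [okA] at hcase
          rw [okB]
          refine ⟨?_, ?_, ?_⟩
          · by_contra h
            apply hcase
            constructor
            · omega
            · right; omega
          · by_contra! h
            apply hcase
            exact ⟨by omega, Or.inl h.1⟩
          · simp
    · rw [if_neg hji]
      have hij : i ≠ j := fun h => hji h.symm
      simp only [X, Yval]
      have e1 : (b + Pi.single j 1 : Fin n → ℕ) i = b i := by simp [hij]
      rw [e1]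
      by_cases hbi : 0 < b i
      · by_cases haj : 0 < a j
        · by_cases okA : ∀ k ∉ J, (a + Pi.single i 1 : Fin n → ℕ) k ≤ 1
          · by_cases okB : ∀ k ∈ J, (b + Pi.single j 1 : Fin n → ℕ) k ≤ 1
            · rw [if_pos ⟨hbi, okA⟩, if_pos ⟨haj, okB, hbi⟩]
              obtain ⟨a', rfl⟩ : ∃ a' : Fin n → ℕ, a = a' + Pi.single j 1 := ⟨_, (sub_add_single a j haj).symm⟩
              obtain ⟨b', rfl⟩ : ∃ b' : Fin n → ℕ, b = b' + Pi.single i 1 := ⟨_, (sub_add_single b i hbi).symm⟩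
              have e2 : a' + Pi.single j 1 + Pi.single i 1 - Pi.single j 1
                  = a' + Pi.single i 1 := by
                rw [add_right_comm]; exact add_tsub_cancel_right _ _
              have e3 : b' + Pi.single i 1 + Pi.single j 1 - Pi.single i 1
                  = b' + Pi.single j 1 := by
                rw [add_right_comm]; exact add_tsub_cancel_right _ _
              have e4 : a' + Pi.single j 1 - Pi.single j 1 = a' := add_tsub_cancel_right _ _
              have e5 : b' + Pi.single i 1 - Pi.single i 1 = b' := add_tsub_cancel_right _ _
              rw [e2, e3, e4, e5, ← add_smul, tt_cancel g a' b' i j hij, zero_smul]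
            · rw [if_pos ⟨hbi, okA⟩, if_neg (fun h => okB h.2.1), add_zero]
              push Not at okB
              obtain ⟨k, hk, hk'⟩ := okB
              have hkj : k = j := by
                by_contra hkj
                have := hb k hk
                simp [hkj] at hk'
                omega
              subst hkj
              rw [mon_eq_zero v _ k (hsq k hk), map_zero, smul_zero]
              simpa [hji] using hk'
          · rw [if_neg (fun h => okA h.2), zero_add]
            push Not at okA
            obtain ⟨k, hk, hk'⟩ := okA
            have hki : k = i := by
              by_contra hki
              have := haJ k hk
              simp [hki] at hk'
              omega
            subst hki
            rw [el_of_not J _ _ _ k hk, smul_zero, ite_self]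
            simpa [hij] using hk'
        · rw [if_neg (c := _ ∧ _ ∧ _) (fun h => haj h.1), add_zero]
          rw [sub_single_of_zero _ j, el_of_sum, smul_zero, ite_self]
          · rw [sum_add_single]; omega
          · simp [hji]; omega
      · rw [if_neg (fun h => hbi h.1), if_neg (fun h => hbi h.2.2), add_zero]
  simp only [hXY, Finset.sum_ite_eq', Finset.mem_univ, if_true]

end koszul

section homotopy

variable {n : ℕ} (J : Finset (Fin n)) {A : Type} [Ring A] [Algebra ℂ A]
  (v : Fin n → A) (g : Fin n → Fin n → ℂ) (Bs : Module.Basis (BIdx J) ℂ A)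
  (idx : (Fin n → ℕ) → Fin n)

/-- The contracting homotopy. -/
noncomputable def hty (m : ℕ) : (EIdx J m →₀ A) →ₗ[ℂ] (EIdx J (m+1) →₀ A) :=
  Finsupp.lsum ℕ fun a => Bs.constr ℂ fun b => Hval J v g idx m a.1 b.1

lemma hty_single (hBs : ∀ b, Bs b = mon v b.1) (m : ℕ) (a : EIdx J m) (b : BIdx J) :
    hty J v g Bs idx m (Finsupp.single a (mon v b.1)) = Hval J v g idx m a.1 b.1 := by
  simp only [hty, Finsupp.lsum_single, ← hBs, Module.Basis.constr_basis]

lemma hty_dif (hcomm : ∀ i j, i < j → v j * v i = g i j • (v i * v j))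
    (hsq : ∀ i ∈ J, v i * v i = 0)
    (hBs : ∀ b, Bs b = mon v b.1) (m : ℕ) (a : EIdx J (m+1)) (b : BIdx J) :
    hty J v g Bs idx m (dif J v g m (Finsupp.single a (mon v b.1))) =
      ∑ j, Yval J v g (idx (a.1 + b.1)) (m+1) a.1 b.1 j := by
  classical
  rw [dif_single, map_sum]
  refine Finset.sum_congr rfl fun j _ => ?_
  rw [mon_mul v g hcomm, el_smul, smul_smul, map_smul, Yval]
  by_cases haj : 0 < a.1 j
  · by_cases okB : ∀ k ∈ J, (b.1 + Pi.single j 1 : Fin n → ℕ) k ≤ 1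
    · have hs := sum_sub_single a.1 j haj
      have ha := a.2.1
      rw [el_coe J m ⟨a.1 - Pi.single j 1, by omega,
          fun k hk => (sub_single_le a.1 j k).trans (a.2.2 k hk)⟩,
        hty_single J v g Bs idx hBs m _ ⟨_, okB⟩, Hval]
      have e : a.1 - Pi.single j 1 + (b.1 + Pi.single j 1) = a.1 + b.1 := by
        conv_rhs => rw [← sub_add_single a.1 j haj]
        rw [add_assoc, add_comm b.1]
      simp only [e]
      by_cases h3 : 0 < (b.1 + Pi.single j 1 : Fin n → ℕ) (idx (a.1 + b.1))
      · rw [if_pos h3, if_pos ⟨haj, okB, h3⟩, smul_smul]; rfl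
      · rw [if_neg h3, if_neg (fun h => h3 h.2.2), smul_zero]
    · rw [if_neg (fun h => okB h.2.1)]
      push Not at okB
      obtain ⟨k, hk, hk'⟩ := okB
      rw [mon_eq_zero v _ k (hsq k hk) hk', map_zero, map_zero, smul_zero]
  · rw [if_neg (fun h => haj h.1), sub_single_of_zero _ _ (by omega), el_of_sum, map_zero, smul_zero]
    have := a.2.1
    omega

theorem koszul_ext (hn : 1 ≤ n) (hg : ∀ i j, g i j * g i j = 1)
    (hcomm : ∀ i j, i < j → v j * v i = g i j • (v i * v j))
    (hsq : ∀ i ∈ J, v i * v i = 0)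
    (hBs : ∀ b, Bs b = mon v b.1) (ε : A →ₐ[ℂ] ℂ) (hε : ∀ i, ε (v i) = 0)
    [Module A ℂ] (hmod : ∀ (r : A) (z : ℂ), r • z = ε r * z) (m : ℕ) :
    Nonempty (((Ext ℂ (ModuleCat A) m).obj (Opposite.op (ModuleCat.of A ℂ))).obj
      (ModuleCat.of A ℂ) ≃ₗ[ℂ] (EIdx J m → ℂ)) := by
  classical
  obtain ⟨idx, hidx⟩ : ∃ idx : (Fin n → ℕ) → Fin n, ∀ w : Fin n → ℕ, w ≠ 0 → 0 < w (idx w) := by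
    have : ∀ w : Fin n → ℕ, ∃ i : Fin n, w ≠ 0 → 0 < w i := by
      intro w
      by_cases hw : w = 0
      · exact ⟨⟨0, hn⟩, fun h => absurd hw h⟩
      · obtain ⟨i, hi⟩ := Function.ne_iff.1 hw
        exact ⟨i, fun _ => Nat.pos_of_ne_zero hi⟩
    choose f hf using this
    exact ⟨f, hf⟩
  let εl : A →ₗ[A] ℂ :=
    { toFun := ε
      map_add' := map_add ε
      map_smul' := fun r x => by
        rw [smul_eq_mul, map_mul, RingHom.id_apply, hmod] }
  let aug : (EIdx J 0 →₀ A) →ₗ[A] ℂ := Finsupp.lsum ℕ fun _ => εl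
  have haug1 : ∀ a x, aug (Finsupp.single a x) = ε x := fun a x => by
    simp only [aug, Finsupp.lsum_single]; rfl
  have haugc : ∀ (c : ℂ) x, aug (c • x) = c * aug x := by
    intro c x
    rw [← algebraMap_smul A c x, map_smul, hmod, AlgHom.commutes]; rfl
  let aug' : (EIdx J 0 →₀ A) →ₗ[ℂ] ℂ :=
    { toFun := aug, map_add' := map_add aug, map_smul' := haugc }
  have hok0 : (∑ i, (0 : Fin n → ℕ) i) = 0 ∧ ∀ i ∉ J, (0 : Fin n → ℕ) i ≤ 1 := by simp
  let z : EIdx J 0 := ⟨0, hok0⟩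
  have hz : ∀ a : EIdx J 0, a = z := fun a => Subtype.ext (by
    ext i
    change a.1 i = 0
    simpa using (Finset.sum_eq_zero_iff.1 a.2.1) i (Finset.mem_univ i))
  refine ext_equiv (EIdx J) (dif J v g) aug ε hmod (dif_dif J v g hg hcomm hsq) ?_ ?_ ?_ ?_ ?_ m
  · intro m x hx
    have key : (dif J v g (m+1)).restrictScalars ℂ ∘ₗ hty J v g Bs idx (m+1) +
        hty J v g Bs idx m ∘ₗ (dif J v g m).restrictScalars ℂ = LinearMap.id := by
      refine Finsupp.lhom_ext' fun a => Bs.ext fun b => ?_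
      simp only [LinearMap.add_apply, LinearMap.comp_apply, LinearMap.restrictScalars_apply,
        Finsupp.lsingle_apply, LinearMap.id_apply, hBs]
      rw [hty_dif J v g Bs idx hcomm hsq hBs, hty_single J v g Bs idx hBs,
        core J v g hg hcomm hsq idx hidx (m+1) a.1 b.1 a.2.1 a.2.2 b.2, el_coe]
      intro h
      have h1 := a.2.1
      have h2 : a.1 = 0 := by
        ext i
        have := congrFun h i
        simp at this
        simp [this.1]
      rw [h2] at h1
      simp at h1
    have := LinearMap.congr_fun key x
    simp only [LinearMap.add_apply, LinearMap.comp_apply, LinearMap.restrictScalars_apply, hx,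
      map_zero, add_zero, LinearMap.id_apply] at this
    exact ⟨_, this⟩
  · intro x
    suffices h : aug ∘ₗ dif J v g 0 = 0 from LinearMap.congr_fun h x
    refine Finsupp.lhom_ext' fun a => LinearMap.ext fun x => ?_
    change aug (dif J v g 0 (Finsupp.single a x)) = 0
    rw [dif_single, map_sum]
    refine Finset.sum_eq_zero fun i _ => ?_
    rw [haugc, el]
    split_ifs with h
    · rw [Finsupp.lsingle_apply, haug1, map_mul, hε, mul_zero, mul_zero]
    · simp
  · intro x hx
    have key : (dif J v g 0).restrictScalars ℂ ∘ₗ hty J v g Bs idx 0 +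
        LinearMap.toSpanSingleton ℂ _ (Finsupp.single z (1 : A)) ∘ₗ aug' = LinearMap.id := by
      refine Finsupp.lhom_ext' fun a => Bs.ext fun b => ?_
      simp only [LinearMap.add_apply, LinearMap.comp_apply, LinearMap.restrictScalars_apply,
        Finsupp.lsingle_apply, LinearMap.id_apply, hBs, LinearMap.toSpanSingleton_apply]
      change _ + aug (Finsupp.single a (mon v b.1)) • _ = _
      rw [haug1, hty_single J v g Bs idx hBs]
      obtain rfl := hz a
      by_cases hb : b.1 = 0
      · rw [hb, mon_zero, map_one, one_smul, Hval, if_neg (by simp), map_zero, zero_add]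
      · have h1 : ε (mon v b.1) = 0 := by
          obtain ⟨i, hi⟩ := Function.ne_iff.1 hb
          rw [mon, map_list_prod]
          refine List.prod_eq_zero ?_
          rw [List.mem_map]
          refine ⟨v i ^ b.1 i, List.mem_ofFn.2 ⟨i, rfl⟩, ?_⟩
          rw [map_pow, hε, zero_pow hi]
        have := core J v g hg hcomm hsq idx hidx 0 z.1 b.1 z.2.1 z.2.2 b.2 (by simpa [z] using hb)
        rw [Finset.sum_eq_zero, add_zero] at this
        · rw [this, h1, zero_smul, add_zero, el_coe]
        · intro j _
          rw [Yval, if_neg]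
          rintro ⟨h, -⟩
          simp [z] at h
    have := LinearMap.congr_fun key x
    simp only [LinearMap.add_apply, LinearMap.comp_apply, LinearMap.restrictScalars_apply, 
      LinearMap.id_apply] at this
    change _ + LinearMap.toSpanSingleton ℂ _ _ (aug x) = x at this
    rw [hx, map_zero, add_zero] at this
    exact ⟨_, this⟩
  · intro c
    refine ⟨c • Finsupp.single z 1, ?_⟩
    rw [haugc, haug1, map_one, mul_one]
  · intro m a e
    rw [dif_single, Finsupp.finsetSum_apply, map_sum]
    refine Finset.sum_eq_zero fun i _ => ?_
    rw [Finsupp.smul_apply, map_smul, el]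
    split_ifs with h
    · rw [Finsupp.lsingle_apply, Finsupp.single_apply]
      split_ifs
      · rw [map_mul, hε, mul_zero, smul_zero]
      · simp
    · simp

end homotopy

section counting

variable {n : ℕ} (J : Finset (Fin n))

instance EIdx_finite (m : ℕ) : Finite (EIdx J m) := by
  refine Finite.of_injective (β := Fin n → Fin (m+1))
    (fun a i => ⟨a.1 i, Nat.lt_succ_of_le ?_⟩) ?_
  · have := Finset.single_le_sum (f := a.1) (fun _ _ => Nat.zero_le _) (Finset.mem_univ i)
    rw [a.2.1] at this
    exact this
  · intro a b h
    ext i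
    simpa using congrArg Fin.val (congrFun h i)

lemma count_series :
    (PowerSeries.mk fun m => (Nat.card (EIdx J m) : ℚ)) * (1 - PowerSeries.X) ^ J.card =
      (1 + PowerSeries.X) ^ (n - J.card) := by
  classical
  let f : Fin n → PowerSeries ℚ := fun i =>
    if i ∈ J then PowerSeries.mk fun _ => 1 else 1 + PowerSeries.X
  have hf : ∀ i k, PowerSeries.coeff k (f i) = if i ∉ J → k ≤ 1 then 1 else 0 := by
    intro i k
    by_cases hi : i ∈ J
    · simp [f, hi]
    · simp only [f, hi, if_false, map_add, PowerSeries.coeff_one, PowerSeries.coeff_X]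
      rcases k with _ | _ | k <;> simp
  have h1 : (PowerSeries.mk fun m => (Nat.card (EIdx J m) : ℚ)) = ∏ i, f i := by
    ext m
    rw [PowerSeries.coeff_mk, PowerSeries.coeff_prod]
    simp only [hf, Finset.prod_ite_zero, Finset.prod_const_one, Finset.mem_univ, true_imp_iff]
    rw [Finset.sum_boole, ← Finset.card_map Finsupp.equivFunOnFinite.toEmbedding]
    congr 1
    refine Nat.subtype_card _ fun a => ?_
    simp only [Finset.mem_map_equiv, Finset.mem_filter, Finset.mem_finsuppAntidiag,
      Finset.subset_univ, and_true, Finsupp.equivFunOnFinite_symm_apply_apply]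
  have h2 : (1 - PowerSeries.X : PowerSeries ℚ) ^ J.card =
      ∏ i, if i ∈ J then 1 - PowerSeries.X else 1 := by
    rw [Finset.prod_ite, Finset.prod_const_one, Finset.prod_const, mul_one]
    simp
  have h3 : (1 + PowerSeries.X : PowerSeries ℚ) ^ (n - J.card) =
      ∏ i, if i ∈ J then 1 else 1 + PowerSeries.X := by
    rw [Finset.prod_ite, Finset.prod_const_one, Finset.prod_const, one_mul]
    congr 1
    rw [show (Finset.univ.filter fun i => i ∉ J) = Jᶜ by ext; simp, Finset.card_compl,
      Fintype.card_fin]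
  rw [h1, h2, h3, ← Finset.prod_mul_distrib]
  refine Finset.prod_congr rfl fun i _ => ?_
  by_cases hi : i ∈ J
  · simp only [f, hi, if_true]
    exact PowerSeries.mk_one_mul_one_sub_eq_one ℚ
  · simp [f, hi]

end counting

lemma extC_equiv (n : ℕ) (hn : 1 ≤ n) (J : Finset (Fin n))
    (σ : Fin n → Fin n → ℂ) (hσ : ∀ i j : Fin n, σ i j = 1 ∨ σ i j = -1)
    (ε : RingQuot (colorRel n J σ) →ₐ[ℂ] ℂ)
    (hε : ∀ i : Fin n, ε (RingQuot.mkAlgHom ℂ (colorRel n J σ) (ι ℂ i)) = 0) (m : ℕ) :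
    Nonempty (extC (RingQuot (colorRel n J σ)) ε m ≃ₗ[ℂ] (EIdx J m →₀ ℂ)) := by
  have hg : ∀ i j, σ i j * σ i j = 1 := fun i j => by rcases hσ i j with h | h <;> simp [h]
  letI : Module (RingQuot (colorRel n J σ)) ℂ := Module.compHom ℂ ε.toRingHom
  obtain ⟨e⟩ := koszul_ext J (gen J σ) σ (pbwBasis J σ hg) hn hg (gen_comm J σ hg) (gen_sq J σ)
    (pbwBasis_apply J σ hg) ε hε (fun _ _ => rfl) m
  exact ⟨e.trans (Finsupp.linearEquivFunOnFinite ℂ ℂ (EIdx J m)).symm⟩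

theorem colorAlgebra_ext_dims (n : ℕ) (hn : 1 ≤ n) (J : Finset (Fin n))
    (σ : Fin n → Fin n → ℂ) (hσ : ∀ i j : Fin n, σ i j = 1 ∨ σ i j = -1)
    (ε : RingQuot (colorRel n J σ) →ₐ[ℂ] ℂ)
    (hε : ∀ i : Fin n, ε (RingQuot.mkAlgHom ℂ (colorRel n J σ) (ι ℂ i)) = 0) :
    (∀ m : ℕ, extDim (RingQuot (colorRel n J σ)) ε m =
        Nat.card {a : Fin n → ℕ | (∑ i, a i) = m ∧ ∀ i ∉ J, a i ≤ 1}) ∧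
    (PowerSeries.mk fun m => (extDim (RingQuot (colorRel n J σ)) ε m : ℚ)) *
        (1 - PowerSeries.X) ^ (J.card : ℕ) = (1 + PowerSeries.X) ^ (n - J.card) ∧
    (FiniteDimensional ℂ (⨁ m : ℕ, extC (RingQuot (colorRel n J σ)) ε m) ↔ J = ∅) := by
  classical
  have he := extC_equiv n hn J σ hσ ε hε
  have hdim : ∀ m : ℕ, extDim (RingQuot (colorRel n J σ)) ε m = Nat.card (EIdx J m) := by
    intro m
    obtain ⟨e⟩ := he m
    haveI := Fintype.ofFinite (EIdx J m)
    rw [extDim, e.finrank_eq, Module.finrank_finsupp_self, Nat.card_eq_fintype_card]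
  refine ⟨hdim, ?_, ?_⟩
  · simp only [hdim]
    exact count_series J
  · let e := fun m => (he m).some
    let E : (⨁ m : ℕ, extC (RingQuot (colorRel n J σ)) ε m) ≃ₗ[ℂ] ((Σ m, EIdx J m) →₀ ℂ) :=
      (DFinsupp.mapRange.linearEquiv e).trans (sigmaFinsuppLequivDFinsupp ℂ).symm
    have hfin : FiniteDimensional ℂ (⨁ m : ℕ, extC (RingQuot (colorRel n J σ)) ε m) ↔
        Finite (Σ m, EIdx J m) := by
      constructor
      · intro h
        exact Module.Finite.finite_basis (Module.Basis.ofRepr E)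
      · intro h
        exact Module.Finite.of_basis (Module.Basis.ofRepr E)
    rw [hfin]
    constructor
    · intro h
      by_contra hJ
      obtain ⟨i, hi⟩ := Finset.nonempty_iff_ne_empty.2 hJ
      refine not_injective_infinite_finite (α := ℕ) (β := Σ m, EIdx J m)
        (fun m => ⟨m, ⟨Pi.single i m, by simp, fun k hk => ?_⟩⟩) ?_
      · have : k ≠ i := fun h => hk (h ▸ hi)
        simp [this]
      · intro a b hab
        exact congrArg Sigma.fst hab
    · rintro rfl
      refine Finite.of_injective (β := Fin n → Fin 2)
        (fun a i => ⟨a.2.1 i, Nat.lt_succ_of_le (a.2.2.2 i (by simp))⟩) ?_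
      rintro ⟨m, a, ha, ha'⟩ ⟨m', b, hb, hb'⟩ h
      have hab : a = b := by
        ext i
        simpa using congrArg Fin.val (congrFun h i)
      subst hab
      subst ha
      subst hb
      rfl
end

section
/- Let μ ∈ ℂ with μ ≠ 0, and let R be the quotient of ℂ⟨e1,e2,e3⟩ by the two-sided ideal generated by e1e2 − e2e1 − μe2, e1e3 − e3e1 − e3, and e2e3 + e3e2. If μ ≠ −1, then h_0 = h_1 = 1 and h_n = 0 for all n ≥ 2. If μ = −1, then h_0 = h_1 = h_2 = h_3 = 1 and h_n = 0 for all n ≥ 4. -/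
open CategoryTheory FreeAlgebra

/-- Relations: `e1e2 - e2e1 = μe2`, `e1e3 - e3e1 = e3`, `e2e3 + e3e2 = 0`. -/
inductive CRel (μ : ℂ) : FreeAlgebra ℂ (Fin 3) → FreeAlgebra ℂ (Fin 3) → Prop
  | r12 : CRel μ (ι ℂ 0 * ι ℂ 1 - ι ℂ 1 * ι ℂ 0) (μ • ι ℂ 1)
  | r13 : CRel μ (ι ℂ 0 * ι ℂ 2 - ι ℂ 2 * ι ℂ 0) (ι ℂ 2)
  | r23 : CRel μ (ι ℂ 1 * ι ℂ 2 + ι ℂ 2 * ι ℂ 1) 0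

section General

theorem finrank_homology (S : ShortComplex (ModuleCat.{0} ℂ)) [Module.Finite ℂ S.X₂] :
    Module.finrank ℂ S.homology + Module.finrank ℂ (LinearMap.range S.g.hom)
      + Module.finrank ℂ (LinearMap.range S.f.hom) = Module.finrank ℂ S.X₂ := by
  have h1 := LinearEquiv.finrank_eq S.moduleCatHomologyIso.toLinearEquiv
  have h2 := LinearMap.finrank_range_add_finrank_ker S.g.hom
  have h3 := Submodule.finrank_quotient_add_finrank (LinearMap.range S.moduleCatToCycles)
  have h4 : Module.finrank ℂ (LinearMap.range S.moduleCatToCycles) =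
      Module.finrank ℂ (LinearMap.range S.f.hom) := by
    have : LinearMap.range S.f.hom = (LinearMap.range S.moduleCatToCycles).map
        (LinearMap.ker S.g.hom).subtype := by
      rw [← LinearMap.range_comp]
      rfl
    rw [this]
    exact (LinearEquiv.finrank_eq (Submodule.equivMapOfInjective _
      (Submodule.subtype_injective _) _))
  have h1' : Module.finrank ℂ S.homology = Module.finrank ℂ
    (LinearMap.ker S.g.hom ⧸ (LinearMap.range S.moduleCatToCycles)) := h1
  omega

variable (R : Type) [Ring R] 

/-- The chain complex of free modules given by matrices. -/
noncomputable def matCx (k : ℕ → ℕ) (M : ∀ n, Matrix (Fin (k (n+1))) (Fin (k n)) R)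
    (hM : ∀ n, M (n+1) * M n = 0) : ChainComplex (ModuleCat.{0} R) ℕ :=
  ChainComplex.of (fun n => ModuleCat.of R (Fin (k n) → R))
    (fun n => ModuleCat.ofHom (M n).vecMulLinear)
    (fun n => by
      refine ModuleCat.hom_ext (LinearMap.ext fun v => ?_)
      show Matrix.vecMul (Matrix.vecMul v (M (n+1))) (M n) = 0
      rw [Matrix.vecMul_vecMul, hM, Matrix.vecMul_zero])

theorem matCx_d (k : ℕ → ℕ) (M : ∀ n, Matrix (Fin (k (n+1))) (Fin (k n)) R)
    (hM : ∀ n, M (n+1) * M n = 0) (n : ℕ) :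
    (matCx R k M hM).d (n+1) n = ModuleCat.ofHom (M n).vecMulLinear := by
  simp only [matCx, ChainComplex.of_d]

/-- The resolution. -/
noncomputable def matRes (k : ℕ → ℕ) (M : ∀ n, Matrix (Fin (k (n+1))) (Fin (k n)) R)
    (hM : ∀ n, M (n+1) * M n = 0)
    (hex : ∀ n (v : Fin (k (n+1)) → R), Matrix.vecMul v (M n) = 0 →
      ∃ w, Matrix.vecMul w (M (n+1)) = v)
    (Z : ModuleCat.{0} R) (p : (Fin (k 0) → R) →ₗ[R] Z) (hp : Function.Surjective p)
    (hp0 : ∀ w, p (Matrix.vecMul w (M 0)) = 0)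
    (hp1 : ∀ v, p v = 0 → ∃ w, Matrix.vecMul w (M 0) = v) :
    ProjectiveResolution Z where
  complex := matCx R k M hM
  projective n := by
    show Projective (ModuleCat.of R (Fin (k n) → R))
    exact ModuleCat.projective_of_free (Pi.basisFun R (Fin (k n)))
  π := (ChainComplex.toSingle₀Equiv _ _).symm ⟨ModuleCat.ofHom p, by
      rw [matCx_d]
      exact ModuleCat.hom_ext (LinearMap.ext fun v => hp0 v)⟩
  quasiIso := ⟨fun n => by
    cases n with
    | zero =>
      rw [ChainComplex.quasiIsoAt₀_iff, ShortComplex.quasiIso_iff_of_zeros']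
      · have hz : ModuleCat.ofHom (M 0).vecMulLinear ≫ ModuleCat.ofHom p = 0 := by
          exact ModuleCat.hom_ext (LinearMap.ext fun v => hp0 v)
        have key : (ShortComplex.mk (ModuleCat.ofHom (M 0).vecMulLinear)
            (ModuleCat.ofHom p) hz).Exact ∧ Epi (ModuleCat.ofHom p) := by
          constructor
          · rw [ShortComplex.moduleCat_exact_iff]
            exact hp1
          · rw [ModuleCat.epi_iff_surjective]
            exact hp
        refine (ShortComplex.exact_and_epi_g_iff_of_iso ?_).2 key
        refine ShortComplex.isoMk (Iso.refl _) (Iso.refl _) (Iso.refl _) ?_ ?_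
        · exact (Category.id_comp _).trans
            ((matCx_d R k M hM 0).symm.trans (Category.comp_id _).symm)
        · dsimp
          simp
          rfl
      all_goals rfl
    | succ n =>
      rw [quasiIsoAt_iff_exactAt']
      · rw [HomologicalComplex.exactAt_iff' _ (n + 1 + 1) (n + 1) n (by simp) (by simp)]
        rw [ShortComplex.moduleCat_exact_iff]
        intro x hx
        have hx' : (matCx R k M hM).d (n+1) n x = 0 := hx
        rw [matCx_d] at hx'
        obtain ⟨w, hw⟩ := hex n x hx'
        refine ⟨w, ?_⟩
        show (matCx R k M hM).d (n+1+1) (n+1) w = x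
        rw [matCx_d]
        exact hw
      · apply ChainComplex.exactAt_succ_single_obj⟩

variable [Algebra ℂ R] (ε : R →ₐ[ℂ] ℂ)

/-- the trivial module -/
noncomputable def triv : ModuleCat.{0} R :=
  letI : Module R ℂ := Module.compHom ℂ ε.toRingHom
  ModuleCat.of R ℂ

/-- a function of the trivial module to `ℂ`, the identity. -/
noncomputable def trivC : triv R ε ≃+ ℂ := AddEquiv.refl ℂ

theorem trivC_smul (r : R) (z : triv R ε) : trivC R ε (r • z) = ε r * trivC R ε z := rfl

theorem trivC_symm_smul (r : R) (z : ℂ) :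
    (trivC R ε).symm (ε r * z) = r • (trivC R ε).symm z := rfl

/-- Linear maps from a free module. -/
noncomputable def homInv (k : ℕ) (c : Fin k → ℂ) : (Fin k → R) →ₗ[R] triv R ε :=
  { toFun v := (trivC R ε).symm (∑ i, ε (v i) * c i)
    map_add' x y := by
      simp [add_mul, Finset.sum_add_distrib]
    map_smul' r x := by
      rw [RingHom.id_apply, ← trivC_symm_smul, Finset.mul_sum]
      simp [mul_assoc] }

/-- Homs from a free module. -/
noncomputable def homEquiv (k : ℕ) :
    (ModuleCat.of R (Fin k → R) ⟶ triv R ε) ≃ₗ[ℂ] (Fin k → ℂ) where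
  toFun f i := trivC R ε (f.hom (Pi.single i 1))
  invFun c := ModuleCat.ofHom (Y := triv R ε) (homInv R ε k c)
  map_add' f g := by
    ext i
    simp
  map_smul' r f := by
    ext i
    have : (r • f).hom (Pi.single i 1) = (algebraMap ℂ R r) • f.hom (Pi.single i 1) := rfl
    rw [this, trivC_smul]
    simp
  left_inv f := by
    refine ModuleCat.hom_ext ?_
    refine (Pi.basisFun R (Fin k)).ext fun i => ?_
    show (trivC R ε).symm (∑ j, ε ((Pi.basisFun R (Fin k)) i j) * _) = _
    rw [Finset.sum_eq_single i]
    · simp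
      rfl
    · intro j _ hj
      simp [Pi.single_eq_of_ne hj]
    · simp
  right_inv c := by
    ext i
    show trivC R ε ((trivC R ε).symm (∑ j, ε ((Pi.single i 1 : Fin k → R) j) * c j)) = _
    rw [Finset.sum_eq_single i]
    · simp
    · intro j _ hj
      simp [Pi.single_eq_of_ne hj]
    · simp

theorem homEquiv_comp {k l : ℕ} (M : Matrix (Fin l) (Fin k) R)
    (f : ModuleCat.of R (Fin k → R) ⟶ triv R ε) :
    homEquiv R ε l (ModuleCat.ofHom M.vecMulLinear ≫ f) =
      Matrix.mulVec (M.map ε) (homEquiv R ε k f) := by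
  obtain ⟨c, rfl⟩ := (homEquiv R ε k).symm.surjective f
  rw [LinearEquiv.apply_symm_apply]
  ext i
  show trivC R ε ((trivC R ε).symm (∑ j, ε (Matrix.vecMul (Pi.single i 1) M j) * c j)) = _
  simp [Matrix.mulVec, dotProduct]

theorem rank_dual {k l : ℕ} (M : Matrix (Fin l) (Fin k) R)
    (D : (ModuleCat.of R (Fin k → R) ⟶ triv R ε) →ₗ[ℂ] (ModuleCat.of R (Fin l → R) ⟶ triv R ε))
    (hD : ∀ f, D f = ModuleCat.ofHom M.vecMulLinear ≫ f) :
    Module.finrank ℂ (LinearMap.range D) = (M.map ε).rank := by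
  have h : (homEquiv R ε l).toLinearMap ∘ₗ D =
      (M.map ε).mulVecLin ∘ₗ (homEquiv R ε k).toLinearMap := by
    ext1 f
    simp only [LinearMap.comp_apply, LinearEquiv.coe_coe, hD]
    exact homEquiv_comp R ε M f
  have h2 : (LinearMap.range D).map (homEquiv R ε l).toLinearMap =
      LinearMap.range (M.map ε).mulVecLin := by
    rw [← LinearMap.range_comp, h, LinearMap.range_comp, LinearEquiv.range, Submodule.map_top]
  rw [Matrix.rank, ← h2]
  exact ((homEquiv R ε l).submoduleMap _).finrank_eq

section
variable (k : ℕ → ℕ) (M : ∀ n, Matrix (Fin (k (n+1))) (Fin (k n)) R)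

theorem extDim_eq_homology
    (hM : ∀ n, M (n+1) * M n = 0)
    (hex : ∀ n (v : Fin (k (n+1)) → R), Matrix.vecMul v (M n) = 0 →
      ∃ w, Matrix.vecMul w (M (n+1)) = v)
    (p : (Fin (k 0) → R) →ₗ[R] triv R ε) (hp : Function.Surjective p)
    (hp0 : ∀ w, p (Matrix.vecMul w (M 0)) = 0)
    (hp1 : ∀ v, p v = 0 → ∃ w, Matrix.vecMul w (M 0) = v)
    (n : ℕ) :
    extDim R ε n = Module.finrank ℂ
      (((matCx R k M hM).linearYonedaObj ℂ (triv R ε)).homology n) :=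
  LinearEquiv.finrank_eq (Iso.toLinearEquiv
    ((matRes R k M hM hex (triv R ε) p hp hp0 hp1).isoExt (R := ℂ) n (triv R ε)))

theorem extDim_zero
    (hM : ∀ n, M (n+1) * M n = 0)
    (hex : ∀ n (v : Fin (k (n+1)) → R), Matrix.vecMul v (M n) = 0 →
      ∃ w, Matrix.vecMul w (M (n+1)) = v)
    (p : (Fin (k 0) → R) →ₗ[R] triv R ε) (hp : Function.Surjective p)
    (hp0 : ∀ w, p (Matrix.vecMul w (M 0)) = 0)
    (hp1 : ∀ v, p v = 0 → ∃ w, Matrix.vecMul w (M 0) = v) : extDim R ε 0 + ((M 0).map ε).rank = k 0 := by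
  rw [extDim_eq_homology R ε k M hM hex p hp hp0 hp1]
  set K := (matCx R k M hM).linearYonedaObj ℂ (triv R ε)
  have e : K.homology 0 ≅ (K.sc' 0 0 1).homology :=
    ShortComplex.homologyMapIso (K.isoSc' 0 0 1 (by simp) (by simp))
  rw [LinearEquiv.finrank_eq e.toLinearEquiv]
  have : Module.Finite ℂ (K.sc' 0 0 1).X₂ := Module.Finite.equiv (homEquiv R ε (k 0)).symm
  have h := finrank_homology (K.sc' 0 0 1)
  have h1 : Module.finrank ℂ (K.sc' 0 0 1).X₂ = k 0 := by
    rw [← Module.finrank_fin_fun ℂ (n := k 0)]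
    exact LinearEquiv.finrank_eq (homEquiv R ε (k 0))
  have h2 : Module.finrank ℂ (LinearMap.range (K.sc' 0 0 1).g.hom) = ((M 0).map ε).rank := by
    refine rank_dual R ε (M 0) _ fun f => ?_
    rw [← matCx_d R k M hM]
    rfl
  have h3 : Module.finrank ℂ (LinearMap.range (K.sc' 0 0 1).f.hom) = 0 := by
    have : (K.sc' 0 0 1).f = 0 := K.shape _ _ (by simp)
    rw [this]
    simp
  omega

theorem extDim_succ
    (hM : ∀ n, M (n+1) * M n = 0)
    (hex : ∀ n (v : Fin (k (n+1)) → R), Matrix.vecMul v (M n) = 0 →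
      ∃ w, Matrix.vecMul w (M (n+1)) = v)
    (p : (Fin (k 0) → R) →ₗ[R] triv R ε) (hp : Function.Surjective p)
    (hp0 : ∀ w, p (Matrix.vecMul w (M 0)) = 0)
    (hp1 : ∀ v, p v = 0 → ∃ w, Matrix.vecMul w (M 0) = v)
    (n : ℕ) :
    extDim R ε (n+1) + ((M (n+1)).map ε).rank + ((M n).map ε).rank = k (n+1) := by
  rw [extDim_eq_homology R ε k M hM hex p hp hp0 hp1]
  set K := (matCx R k M hM).linearYonedaObj ℂ (triv R ε)
  have e : K.homology (n+1) ≅ (K.sc' n (n+1) (n+1+1)).homology :=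
    ShortComplex.homologyMapIso (K.isoSc' n (n+1) (n+1+1) (by simp) (by simp))
  rw [LinearEquiv.finrank_eq e.toLinearEquiv]
  have : Module.Finite ℂ (K.sc' n (n+1) (n+1+1)).X₂ :=
    Module.Finite.equiv (homEquiv R ε (k (n+1))).symm
  have h := finrank_homology (K.sc' n (n+1) (n+1+1))
  have h1 : Module.finrank ℂ (K.sc' n (n+1) (n+1+1)).X₂ = k (n+1) := by
    rw [← Module.finrank_fin_fun ℂ (n := k (n+1))]
    exact LinearEquiv.finrank_eq (homEquiv R ε (k (n+1)))
  have h2 : Module.finrank ℂ (LinearMap.range (K.sc' n (n+1) (n+1+1)).g.hom)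
      = ((M (n+1)).map ε).rank := by
    refine rank_dual R ε (M (n+1)) _ fun f => ?_
    rw [← matCx_d R k M hM]
    rfl
  have h3 : Module.finrank ℂ (LinearMap.range (K.sc' n (n+1) (n+1+1)).f.hom)
      = ((M n).map ε).rank := by
    refine rank_dual R ε (M n) _ fun f => ?_
    rw [← matCx_d R k M hM]
    rfl
  omega
end

end General

section Koszul

/-- ranks of the resolution -/
def kk : ℕ → ℕ
  | 0 => 1
  | 1 => 3
  | 2 => 3
  | 3 => 1
  | _ + 4 => 0

variable {R : Type} [Ring R] [Algebra ℂ R] (μ : ℂ) (x y z : R)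

/-- differentials of the resolution -/
noncomputable def MM : ∀ n, Matrix (Fin (kk (n+1))) (Fin (kk n)) R
  | 0 => (!![x; y; z] : Matrix (Fin 3) (Fin 1) R)
  | 1 => (!![-y, x - algebraMap ℂ R μ, 0; -z, 0, x - 1; 0, z, y] : Matrix (Fin 3) (Fin 3) R)
  | 2 => (!![z, y, -(x - 1 - algebraMap ℂ R μ)] : Matrix (Fin 1) (Fin 3) R)
  | _ + 3 => 0

variable {μ x y z}

theorem MM_sq (hxy : x * y - y * x = algebraMap ℂ R μ * y) (hxz : x * z - z * x = z)
    (hyz : y * z + z * y = 0) (n : ℕ) : MM μ x y z (n+1) * MM μ x y z n = 0 := by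
  have c : z * algebraMap ℂ R μ = algebraMap ℂ R μ * z := (Algebra.commutes _ _).symm
  have c' : y * algebraMap ℂ R μ = algebraMap ℂ R μ * y := (Algebra.commutes _ _).symm
  have hzx : z * x = x * z - z := by nth_rw 3 [← hxz]; abel
  match n with
  | 0 =>
    show (!![-y, x - algebraMap ℂ R μ, 0; -z, 0, x - 1; 0, z, y] : Matrix (Fin 3) (Fin 3) R) *
      (!![x; y; z] : Matrix (Fin 3) (Fin 1) R) = (0 : Matrix (Fin 3) (Fin 1) R)
    ext i j
    fin_cases i <;> fin_cases j <;> simp [Matrix.mul_apply, Fin.sum_univ_three]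
    · rw [sub_mul, ← hxy]; abel
    · rw [sub_mul, one_mul]; nth_rw 3 [← hxz]; abel
    · rw [add_comm, hyz]
  | 1 =>
    show (!![z, y, -(x - 1 - algebraMap ℂ R μ)] : Matrix (Fin 1) (Fin 3) R) *
      (!![-y, x - algebraMap ℂ R μ, 0; -z, 0, x - 1; 0, z, y] : Matrix (Fin 3) (Fin 3) R)
      = (0 : Matrix (Fin 1) (Fin 3) R)
    ext i j
    fin_cases i; fin_cases j <;> simp [Matrix.mul_apply, Fin.sum_univ_three]
    · rw [← neg_eq_zero, ← hyz]; abel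
    · simp only [mul_sub, sub_mul, one_mul, c]
      rw [hzx]; abel
    · simp only [mul_sub, sub_mul, one_mul, mul_one, ← hxy]
      abel
  | n + 2 => exact Matrix.zero_mul _

theorem MM_exact (hxy : x * y - y * x = algebraMap ℂ R μ * y) (hxz : x * z - z * x = z)
    (hyz : y * z + z * y = 0)
    (h1 : ∀ r : R, r * z = 0 → r = 0)
    (h2 : ∀ r s : R, r * y = s * z → ∃ t, r = t * z)
    (h3 : ∀ r s t : R, r * x = s * y + t * z → ∃ s' t', r = s' * y + t' * z)
    (n : ℕ) (v : Fin (kk (n+1)) → R) (hv : Matrix.vecMul v (MM μ x y z n) = 0) :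
    ∃ w, Matrix.vecMul w (MM μ x y z (n+1)) = v := by
  have c : z * algebraMap ℂ R μ = algebraMap ℂ R μ * z := (Algebra.commutes _ _).symm
  have hxy' : x * y = y * x + algebraMap ℂ R μ * y := by rw [← hxy]; abel
  have hzx : z * x = x * z - z := by nth_rw 3 [← hxz]; abel
  have hzy : z * y = - (y * z) := by rw [eq_neg_iff_add_eq_zero, add_comm, hyz]
  match n, v, hv with
  | 0, v, hv =>
    change Fin 3 → R at v
    change Matrix.vecMul v (!![x; y; z] : Matrix (Fin 3) (Fin 1) R) = 0 at hv
    show ∃ w, Matrix.vecMul w (!![-y, x - algebraMap ℂ R μ, 0; -z, 0, x - 1; 0, z, y]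
      : Matrix (Fin 3) (Fin 3) R) = v
    have hv0 := congrFun hv 0
    simp [Matrix.vecMul, dotProduct, Fin.sum_univ_three] at hv0
    obtain ⟨s, t, hst⟩ := h3 (v 0) (- v 1) (- v 2) (by
      rw [← sub_eq_zero, ← hv0]; noncomm_ring)
    have e2 : (v 1 + s * (x - algebraMap ℂ R μ)) * y = - (v 2 + t * (x - 1)) * z := by
      rw [← sub_eq_zero, ← hv0, hst]
      have a1 : s * y * x = s * (x - algebraMap ℂ R μ) * y := by
        rw [mul_assoc, mul_assoc, sub_mul, hxy']; congr 1; abel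
      have a2 : t * z * x = t * (x - 1) * z := by
        rw [mul_assoc, mul_assoc, sub_mul, hzx, one_mul]
      rw [add_mul (s * y), a1, a2]
      noncomm_ring
    obtain ⟨u, hu⟩ := h2 _ _ e2
    have e3 : v 2 + t * (x - 1) - u * y = 0 := by
      apply h1
      rw [hu, mul_assoc, hzy] at e2
      rw [sub_mul]
      rw [mul_neg, neg_mul, neg_inj] at e2
      rw [← e2, mul_assoc, sub_self]
    refine ⟨![-s, -t, u], ?_⟩
    ext j
    fin_cases j <;> simp [Matrix.vecMul, dotProduct, Fin.sum_univ_three]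
    · rw [hst]
    · rw [← hu]; noncomm_ring
    · rw [← sub_eq_zero, ← neg_eq_zero, ← e3]; noncomm_ring
  | 1, v, hv =>
    change Fin 3 → R at v
    change Matrix.vecMul v (!![-y, x - algebraMap ℂ R μ, 0; -z, 0, x - 1; 0, z, y]
      : Matrix (Fin 3) (Fin 3) R) = 0 at hv
    show ∃ w, Matrix.vecMul w (!![z, y, -(x - 1 - algebraMap ℂ R μ)]
      : Matrix (Fin 1) (Fin 3) R) = v
    have hv0 := congrFun hv 0
    have hv1 := congrFun hv 1
    simp [Matrix.vecMul, dotProduct, Fin.sum_univ_three] at hv0 hv1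
    obtain ⟨t, ht⟩ := h2 (v 0) (- v 1) (by
      rw [← sub_eq_zero, ← neg_eq_zero, ← hv0]; noncomm_ring)
    have e1 : v 1 - t * y = 0 := by
      apply h1
      rw [ht, mul_assoc, hzy] at hv0
      rw [← neg_eq_zero, ← hv0]; noncomm_ring
    have e2 : v 2 + t * (x - 1 - algebraMap ℂ R μ) = 0 := by
      apply h1
      rw [← hv1, ht]
      have : t * z * (x - algebraMap ℂ R μ) = t * (x - 1 - algebraMap ℂ R μ) * z := by
        rw [mul_assoc, mul_sub, hzx, c, mul_assoc]
        congr 1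
        noncomm_ring
      rw [this, add_mul, add_comm]
    refine ⟨![t], ?_⟩
    ext j
    fin_cases j <;> simp [Matrix.vecMul, dotProduct]
    · rw [ht]
    · exact (sub_eq_zero.1 e1).symm
    · rw [← sub_eq_zero, ← neg_eq_zero, ← e2]; noncomm_ring
  | 2, v, hv =>
    change Fin 1 → R at v
    change Matrix.vecMul v (!![z, y, -(x - 1 - algebraMap ℂ R μ)]
      : Matrix (Fin 1) (Fin 3) R) = 0 at hv
    have hv0 := congrFun hv 0
    simp [Matrix.vecMul, dotProduct] at hv0
    refine ⟨0, ?_⟩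
    rw [Matrix.zero_vecMul]
    ext j
    fin_cases j
    exact (h1 _ hv0).symm
  | n + 3, v, hv =>
    refine ⟨0, ?_⟩
    ext j
    exact Fin.elim0 (show Fin 0 from j)

end Koszul

section PBW

open Polynomial

/-- The PBW space: `p` at `(a,b)` stands for `p(e₁) e₂^a e₃^b`. -/
abbrev VV := (ℕ × ℕ) →₀ ℂ[X]

/-- substitution `p(X) ↦ p(X - c)` -/
noncomputable def sh (c : ℂ) : ℂ[X] →ₗ[ℂ] ℂ[X] := (aeval (X - C c)).toLinearMap

theorem sh_X_mul (c : ℂ) (p : ℂ[X]) : sh c (X * p) = (X - C c) * sh c p := by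
  simp [sh]

theorem sh_comm (c d : ℂ) (p : ℂ[X]) : sh c (sh d p) = sh d (sh c p) := by
  have : ((aeval (X - C c) : ℂ[X] →ₐ[ℂ] ℂ[X]).comp (aeval (X - C d))) =
    ((aeval (X - C d) : ℂ[X] →ₐ[ℂ] ℂ[X]).comp (aeval (X - C c))) := by
    ext
    simp
    ring_nf
  exact DFunLike.congr_fun this p

theorem sh_one (c : ℂ) : sh c 1 = 1 := by simp [sh]

/-- left multiplication by `e₁` -/
noncomputable def L1 : VV →ₗ[ℂ] VV :=
  Finsupp.lsum ℂ fun ab => Finsupp.lsingle ab ∘ₗ LinearMap.mulLeft ℂ X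
/-- left multiplication by `e₂` -/
noncomputable def L2 (μ : ℂ) : VV →ₗ[ℂ] VV :=
  Finsupp.lsum ℂ fun ab => Finsupp.lsingle (ab.1 + 1, ab.2) ∘ₗ sh μ
/-- left multiplication by `e₃` -/
noncomputable def L3 : VV →ₗ[ℂ] VV :=
  Finsupp.lsum ℂ fun ab => (-1 : ℂ) ^ ab.1 • (Finsupp.lsingle (ab.1, ab.2 + 1) ∘ₗ sh 1)
/-- right multiplication by `e₁` -/
noncomputable def P1 (μ : ℂ) : VV →ₗ[ℂ] VV :=
  Finsupp.lsum ℂ fun ab => Finsupp.lsingle ab ∘ₗ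
    LinearMap.mulLeft ℂ (X - C (ab.1 * μ + ab.2))
/-- right multiplication by `e₂` -/
noncomputable def P2 : VV →ₗ[ℂ] VV :=
  Finsupp.lsum ℂ fun ab => (-1 : ℂ) ^ ab.2 • Finsupp.lsingle (ab.1 + 1, ab.2)
/-- right multiplication by `e₃` -/
noncomputable def P3 : VV →ₗ[ℂ] VV :=
  Finsupp.lsum ℂ fun ab => Finsupp.lsingle (ab.1, ab.2 + 1)

variable (μ : ℂ) (a b : ℕ) (p : ℂ[X])

@[simp] theorem L1_single : L1 (Finsupp.single (a, b) p) = Finsupp.single (a, b) (X * p) := by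
  simp [L1]
@[simp] theorem L2_single :
    L2 μ (Finsupp.single (a, b) p) = Finsupp.single (a + 1, b) (sh μ p) := by
  simp [L2]
@[simp] theorem L3_single :
    L3 (Finsupp.single (a, b) p) = Finsupp.single (a, b + 1) ((-1 : ℂ) ^ a • sh 1 p) := by
  simp [L3]
@[simp] theorem P1_single : P1 μ (Finsupp.single (a, b) p) =
    Finsupp.single (a, b) ((X - C (a * μ + b)) * p) := by
  simp [P1]
@[simp] theorem P2_single :
    P2 (Finsupp.single (a, b) p) = Finsupp.single (a + 1, b) ((-1 : ℂ) ^ b • p) := by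
  simp [P2]
@[simp] theorem P3_single :
    P3 (Finsupp.single (a, b) p) = Finsupp.single (a, b + 1) p := by
  simp [P3]

theorem VV_ext {W : Type} [AddCommMonoid W] [Module ℂ W] {f g : VV →ₗ[ℂ] W}
    (h : ∀ a b p, f (Finsupp.single (a, b) p) = g (Finsupp.single (a, b) p)) : f = g :=
  Finsupp.lhom_ext fun ab p => h ab.1 ab.2 p

-- coordinates
theorem P1_apply (f : VV) : P1 μ f (a, b) = (X - C (a * μ + b)) * f (a, b) := by
  have : Finsupp.lapply (a, b) ∘ₗ P1 μ =
    LinearMap.mulLeft ℂ (X - C (a * μ + b)) ∘ₗ Finsupp.lapply (R := ℂ) (M := ℂ[X]) (a, b) := by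
    apply VV_ext
    intro a₁ b₁ q
    by_cases h : a₁ = a ∧ b₁ = b
    · obtain ⟨rfl, rfl⟩ := h
      simp
    · have : (a₁, b₁) ≠ (a, b) := by simpa using h
      simp [Finsupp.single_eq_of_ne' this]
  exact DFunLike.congr_fun this f

theorem P2_succ (f : VV) : P2 f (a + 1, b) = (-1 : ℂ) ^ b • f (a, b) := by
  have : Finsupp.lapply (a + 1, b) ∘ₗ P2 =
    (-1 : ℂ) ^ b • Finsupp.lapply (R := ℂ) (M := ℂ[X]) (a, b) := by
    apply VV_ext
    intro a₁ b₁ q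
    by_cases h : a₁ = a ∧ b₁ = b
    · obtain ⟨rfl, rfl⟩ := h
      simp
    · have h1 : (a₁, b₁) ≠ (a, b) := by simpa using h
      have h2 : (a₁ + 1, b₁) ≠ (a + 1, b) := by simpa using h
      simp [Finsupp.single_eq_of_ne' h1, Finsupp.single_eq_of_ne' h2]
  exact DFunLike.congr_fun this f

theorem P2_zero (f : VV) : P2 f (0, b) = 0 := by
  have : Finsupp.lapply (0, b) ∘ₗ P2 = (0 : VV →ₗ[ℂ] ℂ[X]) := by
    apply VV_ext
    intro a₁ b₁ q
    simp
  exact DFunLike.congr_fun this f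

theorem P3_succ (f : VV) : P3 f (a, b + 1) = f (a, b) := by
  have : Finsupp.lapply (a, b + 1) ∘ₗ P3 = Finsupp.lapply (R := ℂ) (M := ℂ[X]) (a, b) := by
    apply VV_ext
    intro a₁ b₁ q
    by_cases h : a₁ = a ∧ b₁ = b
    · obtain ⟨rfl, rfl⟩ := h
      simp
    · have h1 : (a₁, b₁) ≠ (a, b) := by simpa using h
      have h2 : (a₁, b₁ + 1) ≠ (a, b + 1) := by simpa using h
      simp [Finsupp.single_eq_of_ne' h1, Finsupp.single_eq_of_ne' h2]
  exact DFunLike.congr_fun this f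

theorem P3_zero (f : VV) : P3 f (a, 0) = 0 := by
  have : Finsupp.lapply (a, 0) ∘ₗ P3 = (0 : VV →ₗ[ℂ] ℂ[X]) := by
    apply VV_ext
    intro a₁ b₁ q
    simp
  exact DFunLike.congr_fun this f

theorem P3_inj (f : VV) (h : P3 f = 0) : f = 0 := by
  ext1 ⟨a, b⟩
  rw [← P3_succ, h]
  rfl

theorem P3_range (f : VV) (h : ∀ a, f (a, 0) = 0) : ∃ g, f = P3 g := by
  refine ⟨f.comapDomain (fun ab => (ab.1, ab.2 + 1)) ?_, ?_⟩
  · rintro ⟨a, b⟩ _ ⟨c, d⟩ _ h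
    simpa using h
  · ext1 ⟨a, b⟩
    cases b with
    | zero => rw [h, P3_zero]
    | succ b => rw [P3_succ]; rfl

theorem P23_range (f : VV) (h : f (0, 0) = 0) : ∃ g k, f = P2 g + P3 k := by
  let g : VV := (f.filter (fun ab => ab.2 = 0)).comapDomain (fun ab => (ab.1 + 1, ab.2)) (by
    rintro ⟨a, b⟩ _ ⟨c, d⟩ _ h
    simpa using h)
  obtain ⟨k, hk⟩ := P3_range (f - P2 g) (by
    intro a
    rw [Finsupp.sub_apply]
    cases a with
    | zero => rw [P2_zero, h, sub_zero]
    | succ a =>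
      have hg : g (a, 0) = f (a + 1, 0) := by
        show Finsupp.filter (fun ab : ℕ × ℕ => ab.2 = 0) f (a + 1, 0) = _
        simp
      rw [P2_succ, hg]
      simp)
  exact ⟨g, k, by rw [← hk]; abel⟩

theorem model2 (f g : VV) (h : P2 f = P3 g) : ∃ k, f = P3 k := by
  apply P3_range
  intro a
  have := P2_succ a 0 f
  rw [h, P3_zero] at this
  simpa using this.symm

theorem model3 (f g k : VV) (h : P1 μ f = P2 g + P3 k) : ∃ g k, f = P2 g + P3 k := by
  apply P23_range
  have := P1_apply μ 0 0 f
  rw [h, Finsupp.add_apply, P3_zero, P2_zero] at this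
  simpa using this

-- The algebra.

/-- generators -/
noncomputable def ee (i : Fin 3) : RingQuot (CRel μ) := RingQuot.mkAlgHom ℂ (CRel μ) (ι ℂ i)

theorem rel_xy : ee μ 0 * ee μ 1 - ee μ 1 * ee μ 0 = μ • ee μ 1 := by
  simpa [ee] using RingQuot.mkAlgHom_rel ℂ (CRel.r12 (μ := μ))
theorem rel_xz : ee μ 0 * ee μ 2 - ee μ 2 * ee μ 0 = ee μ 2 := by
  simpa [ee] using RingQuot.mkAlgHom_rel ℂ (CRel.r13 (μ := μ))
theorem rel_yz : ee μ 1 * ee μ 2 + ee μ 2 * ee μ 1 = 0 := by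
  simpa [ee] using RingQuot.mkAlgHom_rel ℂ (CRel.r23 (μ := μ))

theorem RR_induction (S : Submodule ℂ (RingQuot (CRel μ))) (hone : 1 ∈ S)
    (hmul : ∀ i, ∀ r ∈ S, ee μ i * r ∈ S) (r : RingQuot (CRel μ)) : r ∈ S := by
  have key : ∀ w : FreeAlgebra ℂ (Fin 3), ∀ r ∈ S, RingQuot.mkAlgHom ℂ (CRel μ) w * r ∈ S := by
    intro w
    induction w using FreeAlgebra.induction with
    | grade0 c =>
      intro r hr
      rw [AlgHom.commutes, ← Algebra.smul_def]
      exact S.smul_mem c hr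
    | grade1 i => exact hmul i
    | mul a b ha hb =>
      intro r hr
      rw [map_mul, mul_assoc]
      exact ha _ (hb _ hr)
    | add a b ha hb =>
      intro r hr
      rw [map_add, add_mul]
      exact S.add_mem (ha _ hr) (hb _ hr)
  obtain ⟨w, rfl⟩ := RingQuot.mkAlgHom_surjective ℂ (CRel μ) r
  have := key w 1 hone
  rwa [mul_one] at this

/-- the PBW representation -/
noncomputable def rho : RingQuot (CRel μ) →ₐ[ℂ] Module.End ℂ VV :=
  RingQuot.liftAlgHom ℂ ⟨FreeAlgebra.lift ℂ ![L1, L2 μ, L3], by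
    intro x y h
    cases h with
    | r12 =>
      apply VV_ext
      intro a b p
      simp [sh_X_mul, ← Finsupp.single_sub, -Finsupp.single_mul]
      congr 1
      rw [Algebra.smul_def, algebraMap_eq]
      ring
    | r13 =>
      apply VV_ext
      intro a b p
      simp [sh_X_mul, ← Finsupp.single_sub, -Finsupp.single_mul]
      congr 1
      rw [← smul_sub]
      congr 1
      ring
    | r23 =>
      apply VV_ext
      intro a b p
      simp [sh_comm μ 1, pow_succ]⟩

theorem rho_0 : rho μ (ee μ 0) = L1 := by simp [rho, ee]
theorem rho_1 : rho μ (ee μ 1) = L2 μ := by simp [rho, ee]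
theorem rho_2 : rho μ (ee μ 2) = L3 := by simp [rho, ee]

/-- the PBW map -/
noncomputable def psi : VV →ₗ[ℂ] RingQuot (CRel μ) :=
  Finsupp.lsum ℂ fun ab => LinearMap.mulRight ℂ (ee μ 1 ^ ab.1 * ee μ 2 ^ ab.2) ∘ₗ
    (aeval (ee μ 0)).toLinearMap

theorem psi_single : psi μ (Finsupp.single (a, b) p) =
    aeval (ee μ 0) p * (ee μ 1 ^ a * ee μ 2 ^ b) := by
  simp [psi, mul_assoc]

theorem mul_aeval_sh {R : Type} [Ring R] [Algebra ℂ R] (x y : R) (c : ℂ)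
    (h : y * x = (x - algebraMap ℂ R c) * y) (p : ℂ[X]) :
    y * aeval x p = aeval x (sh c p) * y := by
  induction p using Polynomial.induction_on' with
  | add p q hp hq => simp [mul_add, add_mul, hp, hq]
  | monomial n d =>
    have hn : y * x ^ n = (x - algebraMap ℂ R c) ^ n * y := by
      induction n with
      | zero => simp
      | succ n ih => rw [pow_succ, ← mul_assoc, ih, mul_assoc, h, ← mul_assoc, ← pow_succ]
    have h1 : sh c (monomial n d) = C d * (X - C c) ^ n := by
      simp [sh, aeval_monomial]
    rw [h1, aeval_monomial]
    simp only [map_mul, aeval_C, map_pow, map_sub, aeval_X]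
    rw [← mul_assoc, ← Algebra.commutes, mul_assoc, hn, mul_assoc]

theorem gen_yx {R : Type} [Ring R] (x y m : R) (h : x * y - y * x = m * y) :
    y * x = (x - m) * y := by
  rw [sub_mul, ← h]; abel
theorem gen_zy {R : Type} [Ring R] (y z : R) (h : y * z + z * y = 0) :
    z * y = - (y * z) := by
  rw [eq_neg_iff_add_eq_zero, add_comm, h]
theorem gen_zy_pow {R : Type} [Ring R] [Algebra ℂ R] (y z : R) (h : y * z + z * y = 0) (n : ℕ) :
    z * y ^ n = (-1 : ℂ) ^ n • (y ^ n * z) := by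
  induction n with
  | zero => simp
  | succ n ih =>
    rw [pow_succ, ← mul_assoc, ih, smul_mul_assoc, mul_assoc, gen_zy y z h, pow_succ (-1 : ℂ),
      mul_smul]
    simp [mul_assoc]
theorem gen_z_pow_y {R : Type} [Ring R] [Algebra ℂ R] (y z : R) (h : y * z + z * y = 0) (n : ℕ) :
    z ^ n * y = (-1 : ℂ) ^ n • (y * z ^ n) := by
  induction n with
  | zero => simp
  | succ n ih =>
    rw [pow_succ, mul_assoc, gen_zy y z h, mul_neg, ← mul_assoc, ih, pow_succ (-1 : ℂ), mul_smul]
    simp [mul_assoc]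
theorem yx : ee μ 1 * ee μ 0 = (ee μ 0 - algebraMap ℂ _ μ) * ee μ 1 :=
  gen_yx _ _ _ (by rw [← Algebra.smul_def, ← rel_xy])
theorem zx : ee μ 2 * ee μ 0 = (ee μ 0 - algebraMap ℂ _ 1) * ee μ 2 :=
  gen_yx _ _ _ (by rw [map_one, one_mul, rel_xz])
theorem zy_pow : ee μ 2 * ee μ 1 ^ a = (-1 : ℂ) ^ a • (ee μ 1 ^ a * ee μ 2) :=
  gen_zy_pow _ _ (rel_yz μ) _
theorem z_pow_y : ee μ 2 ^ b * ee μ 1 = (-1 : ℂ) ^ b • (ee μ 1 * ee μ 2 ^ b) :=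
  gen_z_pow_y _ _ (rel_yz μ) _
theorem pow_x {R : Type} [Ring R] [Algebra ℂ R] (x y : R) (c : ℂ)
    (h : y * x = (x - algebraMap ℂ R c) * y) (n : ℕ) :
    y ^ n * x = (x - algebraMap ℂ R (n * c)) * y ^ n := by
  induction n with
  | zero => simp
  | succ n ih =>
    rw [pow_succ, mul_assoc, h, ← mul_assoc, mul_sub, ih, ← Algebra.commutes, ← sub_mul, mul_assoc]
    congr 1
    rw [Nat.cast_succ, add_mul, one_mul, map_add]
    abel

theorem psi_L1 (v : VV) : psi μ (L1 v) = ee μ 0 * psi μ v := by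
  have : psi μ ∘ₗ L1 = LinearMap.mulLeft ℂ (ee μ 0) ∘ₗ psi μ := by
    apply VV_ext
    intro a b p
    simp [psi_single, mul_assoc, -Finsupp.single_mul]
  exact DFunLike.congr_fun this v

theorem psi_L2 (v : VV) : psi μ (L2 μ v) = ee μ 1 * psi μ v := by
  have : psi μ ∘ₗ L2 μ = LinearMap.mulLeft ℂ (ee μ 1) ∘ₗ psi μ := by
    apply VV_ext
    intro a b p
    simp only [LinearMap.comp_apply, L2_single, psi_single, LinearMap.mulLeft_apply]
    rw [← mul_assoc (ee μ 1), mul_aeval_sh _ _ μ (yx μ), pow_succ']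
    simp only [mul_assoc]
  exact DFunLike.congr_fun this v

theorem psi_L3 (v : VV) : psi μ (L3 v) = ee μ 2 * psi μ v := by
  have : psi μ ∘ₗ L3 = LinearMap.mulLeft ℂ (ee μ 2) ∘ₗ psi μ := by
    apply VV_ext
    intro a b p
    simp only [LinearMap.comp_apply, L3_single, psi_single, LinearMap.mulLeft_apply]
    rw [← mul_assoc (ee μ 2), mul_aeval_sh _ _ 1 (zx μ), pow_succ', mul_assoc (aeval _ _),
      ← mul_assoc (ee μ 2), zy_pow]
    simp only [mul_assoc, map_smul, smul_mul_assoc, mul_smul_comm]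
  exact DFunLike.congr_fun this v

theorem psi_P1 (v : VV) : psi μ (P1 μ v) = psi μ v * ee μ 0 := by
  have : psi μ ∘ₗ P1 μ = LinearMap.mulRight ℂ (ee μ 0) ∘ₗ psi μ := by
    apply VV_ext
    intro a b p
    simp only [LinearMap.comp_apply, P1_single, psi_single, LinearMap.mulRight_apply]
    rw [mul_assoc (aeval _ _), mul_assoc (_ ^ a), pow_x _ _ 1 (zx μ), ← mul_assoc (_ ^ a),
      mul_sub, pow_x _ _ μ (yx μ), ← Algebra.commutes, ← sub_mul, mul_comm (_ - _) p, map_mul]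
    simp only [mul_assoc, map_sub, aeval_X, aeval_C, map_add, mul_one, sub_sub]
  exact DFunLike.congr_fun this v

theorem psi_P2 (v : VV) : psi μ (P2 v) = psi μ v * ee μ 1 := by
  have : psi μ ∘ₗ P2 = LinearMap.mulRight ℂ (ee μ 1) ∘ₗ psi μ := by
    apply VV_ext
    intro a b p
    simp only [LinearMap.comp_apply, P2_single, psi_single, LinearMap.mulRight_apply]
    rw [mul_assoc (aeval _ _), mul_assoc (_ ^ a), z_pow_y, pow_succ]
    simp only [mul_assoc, map_smul, smul_mul_assoc, mul_smul_comm]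
  exact DFunLike.congr_fun this v

theorem psi_P3 (v : VV) : psi μ (P3 v) = psi μ v * ee μ 2 := by
  have : psi μ ∘ₗ P3 = LinearMap.mulRight ℂ (ee μ 2) ∘ₗ psi μ := by
    apply VV_ext
    intro a b p
    simp [psi_single, mul_assoc, pow_succ]
  exact DFunLike.congr_fun this v

theorem psi_surj (r : RingQuot (CRel μ)) : ∃ v, psi μ v = r := by
  have := RR_induction μ (LinearMap.range (psi μ))
    ⟨Finsupp.single (0, 0) 1, by simp [psi_single]⟩ (by
      rintro i _ ⟨v, rfl⟩
      fin_cases i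
      · exact ⟨_, psi_L1 μ v⟩
      · exact ⟨_, psi_L2 μ v⟩
      · exact ⟨_, psi_L3 μ v⟩) r
  exact this

theorem rho_psi (v : VV) : rho μ (psi μ v) (Finsupp.single (0, 0) 1) = v := by
  have : LinearMap.applyₗ (Finsupp.single (0, 0) 1) ∘ₗ (rho μ).toLinearMap ∘ₗ psi μ =
      (LinearMap.id : VV →ₗ[ℂ] VV) := by
    apply VV_ext
    intro a b p
    have hz : ∀ b, (L3 ^ b : Module.End ℂ VV) (Finsupp.single (0, 0) 1) =
        Finsupp.single (0, b) 1 := by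
      intro b
      induction b with
      | zero => simp
      | succ b ih => rw [pow_succ', Module.End.mul_apply, ih]; simp [sh_one]
    have hy : ∀ a, (L2 μ ^ a : Module.End ℂ VV) (Finsupp.single (0, b) 1) =
        Finsupp.single (a, b) 1 := by
      intro a
      induction a with
      | zero => simp
      | succ a ih => rw [pow_succ', Module.End.mul_apply, ih]; simp [sh_one]
    have hx : aeval (L1 : Module.End ℂ VV) p (Finsupp.single (a, b) 1) =
        Finsupp.single (a, b) p := by
      induction p using Polynomial.induction_on' with
      | add p q hp hq => simp [hp, hq]
      | monomial n d =>
        have : ∀ n, (L1 ^ n : Module.End ℂ VV) (Finsupp.single (a, b) 1) =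
            Finsupp.single (a, b) (X ^ n) := by
          intro n
          induction n with
          | zero => simp
          | succ n ih => rw [pow_succ', Module.End.mul_apply, ih]; simp [pow_succ']
        rw [aeval_monomial, Module.End.mul_apply, this, Module.algebraMap_end_apply,
          Finsupp.smul_single, smul_X_eq_monomial]
    simp only [LinearMap.comp_apply, psi_single, AlgHom.toLinearMap_apply,
      LinearMap.applyₗ_apply_apply, map_mul, map_pow, ← aeval_algHom_apply, rho_0, rho_1, rho_2,
      Module.End.mul_apply, hz, hy, hx, LinearMap.id_apply]
  exact DFunLike.congr_fun this v

theorem psi_inj {v w : VV} (h : psi μ v = psi μ w) : v = w := by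
  rw [← rho_psi μ v, h, rho_psi]

theorem reg1 (r : RingQuot (CRel μ)) (h : r * ee μ 2 = 0) : r = 0 := by
  obtain ⟨v, rfl⟩ := psi_surj μ r
  rw [← psi_P3] at h
  rw [P3_inj v (psi_inj μ (h.trans (map_zero _).symm)), map_zero]

theorem reg2 (r s : RingQuot (CRel μ)) (h : r * ee μ 1 = s * ee μ 2) :
    ∃ t, r = t * ee μ 2 := by
  obtain ⟨v, rfl⟩ := psi_surj μ r
  obtain ⟨w, rfl⟩ := psi_surj μ s
  rw [← psi_P3, ← psi_P2] at h
  obtain ⟨k, rfl⟩ := model2 v w (psi_inj μ h)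
  exact ⟨_, psi_P3 μ k⟩

theorem reg3 (r s t : RingQuot (CRel μ)) (h : r * ee μ 0 = s * ee μ 1 + t * ee μ 2) :
    ∃ s' t', r = s' * ee μ 1 + t' * ee μ 2 := by
  obtain ⟨v, rfl⟩ := psi_surj μ r
  obtain ⟨w, rfl⟩ := psi_surj μ s
  obtain ⟨u, rfl⟩ := psi_surj μ t
  rw [← psi_P3, ← psi_P2, ← psi_P1, ← map_add] at h
  obtain ⟨g, k, rfl⟩ := model3 μ v w u (psi_inj μ h)
  exact ⟨psi μ g, psi μ k, by rw [map_add, psi_P2, psi_P3]⟩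

theorem reg4 (ε : RingQuot (CRel μ) →ₐ[ℂ] ℂ) (hε : ∀ i, ε (ee μ i) = 0)
    (r : RingQuot (CRel μ)) (h : ε r = 0) :
    ∃ s t u, r = s * ee μ 0 + t * ee μ 1 + u * ee μ 2 := by
  let S : Submodule ℂ (RingQuot (CRel μ)) :=
    { carrier := {r | ∃ (c : ℂ) (s t u : RingQuot (CRel μ)),
        r = algebraMap ℂ _ c + (s * ee μ 0 + t * ee μ 1 + u * ee μ 2)}
      zero_mem' := ⟨0, 0, 0, 0, by simp⟩
      add_mem' := by
        rintro _ _ ⟨c, s, t, u, rfl⟩ ⟨c', s', t', u', rfl⟩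
        exact ⟨c + c', s + s', t + t', u + u', by simp only [map_add, add_mul]; abel⟩
      smul_mem' := by
        rintro d _ ⟨c, s, t, u, rfl⟩
        exact ⟨d * c, d • s, d • t, d • u, by
          simp only [smul_add, smul_mul_assoc, map_mul, ← Algebra.smul_def]⟩ }
  have hS : r ∈ S := by
    apply RR_induction μ S ⟨1, 0, 0, 0, by simp⟩
    rintro i _ ⟨c, s, t, u, rfl⟩
    fin_cases i
    · exact ⟨0, ee μ 0 * s + algebraMap ℂ _ c, ee μ 0 * t, ee μ 0 * u, by
        simp [mul_add, add_mul, mul_assoc, Algebra.commutes c (ee μ 0)]; abel⟩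
    · exact ⟨0, ee μ 1 * s, ee μ 1 * t + algebraMap ℂ _ c, ee μ 1 * u, by
        simp [mul_add, add_mul, mul_assoc, Algebra.commutes c (ee μ 1)]; abel⟩
    · exact ⟨0, ee μ 2 * s, ee μ 2 * t, ee μ 2 * u + algebraMap ℂ _ c, by
        simp [mul_add, add_mul, mul_assoc, Algebra.commutes c (ee μ 2)]; abel⟩
  obtain ⟨c, s, t, u, rfl⟩ := hS
  have : c = 0 := by simpa [hε] using h
  subst this
  exact ⟨s, t, u, by simp⟩

end PBW

section Final

variable {R : Type} [Ring R] [Algebra ℂ R] {μ : ℂ} {x y z : R} (ε : R →ₐ[ℂ] ℂ)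

theorem rank_M0 (hx : ε x = 0) (hy : ε y = 0) (hz : ε z = 0) : ((MM μ x y z 0).map ε).rank = 0 := by
  have : (MM μ x y z 0).map ε = 0 := by
    show (!![x; y; z] : Matrix (Fin 3) (Fin 1) R).map ε = (0 : Matrix (Fin 3) (Fin 1) ℂ)
    ext i j
    fin_cases i <;> fin_cases j <;> simp [hx, hy, hz]
  rw [this, Matrix.rank_zero]

theorem rank_M1 (hx : ε x = 0) (hy : ε y = 0) (hz : ε z = 0)
    (hμ : μ ≠ 0) : ((MM μ x y z 1).map ε).rank = 2 := by
  have : (MM μ x y z 1).map ε = (!![0, -μ, 0; 0, 0, -1; 0, 0, 0] : Matrix (Fin 3) (Fin 3) ℂ) := by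
    show (!![-y, x - algebraMap ℂ R μ, 0; -z, 0, x - 1; 0, z, y] : Matrix (Fin 3) (Fin 3) R).map ε
      = _
    ext i j
    fin_cases i <;> fin_cases j <;> simp [hx, hy, hz]
  rw [this]
  set A := (!![0, -μ, 0; 0, 0, -1; 0, 0, 0] : Matrix (Fin 3) (Fin 3) ℂ) with hA
  show A.rank = 2
  have h1 := LinearMap.finrank_range_add_finrank_ker A.mulVecLin
  have h2 : LinearMap.ker A.mulVecLin = Submodule.span ℂ {(Pi.single 0 1 : Fin 3 → ℂ)} := by
    ext v
    rw [LinearMap.mem_ker, Submodule.mem_span_singleton, Matrix.mulVecLin_apply]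
    constructor
    · intro h
      have e0 := congrFun h 0
      have e1 := congrFun h 1
      simp [hA, Matrix.mulVec, dotProduct, Fin.sum_univ_three, hμ] at e0 e1
      refine ⟨v 0, ?_⟩
      ext i
      fin_cases i <;> simp [e0, e1]
    · rintro ⟨c, rfl⟩
      ext i
      fin_cases i <;> simp [hA, Matrix.mulVec, dotProduct, Fin.sum_univ_three]
  rw [h2, finrank_span_singleton (by simp), Module.finrank_fin_fun] at h1
  rw [Matrix.rank]
  omega

theorem M2_eq (hx : ε x = 0) (hy : ε y = 0) (hz : ε z = 0) : (MM μ x y z 2).map ε = (!![0, 0, 1 + μ] : Matrix (Fin 1) (Fin 3) ℂ) := by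
  show (!![z, y, -(x - 1 - algebraMap ℂ R μ)] : Matrix (Fin 1) (Fin 3) R).map ε = _
  ext i j
  fin_cases i
  fin_cases j <;> simp [hx, hy, hz]
  ring

theorem rank_M2 (hx : ε x = 0) (hy : ε y = 0) (hz : ε z = 0)
    (hμ : μ ≠ -1) : ((MM μ x y z 2).map ε).rank = 1 := by
  rw [M2_eq ε hx hy hz]
  show (!![0, 0, 1 + μ] : Matrix (Fin 1) (Fin 3) ℂ).rank = 1
  have h1 := Matrix.rank_le_height (!![0, 0, 1 + μ] : Matrix (Fin 1) (Fin 3) ℂ)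
  have h2 : (!![0, 0, 1 + μ] : Matrix (Fin 1) (Fin 3) ℂ).rank ≠ 0 := by
    rw [Matrix.rank, Ne, Submodule.finrank_eq_zero, LinearMap.range_eq_bot]
    intro h
    have h3 := congrFun (DFunLike.congr_fun h (Pi.single 2 1)) 0
    simp at h3
    apply hμ
    linear_combination h3
  omega

theorem rank_M2' (hx : ε x = 0) (hy : ε y = 0) (hz : ε z = 0)
    (hμ : μ = -1) : ((MM μ x y z 2).map ε).rank = 0 := by
  rw [M2_eq ε hx hy hz, hμ]
  have : (!![0, 0, 1 + -1] : Matrix (Fin 1) (Fin 3) ℂ) = 0 := by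
    ext i j
    fin_cases i
    fin_cases j <;> simp
  rw [this]
  exact Matrix.rank_zero

theorem rank_M3 (n : ℕ) : ((MM μ x y z (n + 3)).map ε).rank = 0 := by
  have : (MM μ x y z (n + 3)).map ε = 0 := by
    show (0 : Matrix (Fin (kk (n+3+1))) (Fin (kk (n+3))) R).map ε = 0
    ext i j
    simp
  rw [this, Matrix.rank_zero]

end Final

theorem ext_dims (μ : ℂ) (ε : RingQuot (CRel μ) →ₐ[ℂ] ℂ) (hε : ∀ i, ε (ee μ i) = 0) :
    extDim _ ε 0 + ((MM μ (ee μ 0) (ee μ 1) (ee μ 2) 0).map ε).rank = 1 ∧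
    ∀ n, extDim _ ε (n+1) + ((MM μ (ee μ 0) (ee μ 1) (ee μ 2) (n+1)).map ε).rank
      + ((MM μ (ee μ 0) (ee μ 1) (ee μ 2) n).map ε).rank = kk (n+1) := by
  have hxy := rel_xy μ
  rw [Algebra.smul_def] at hxy
  let p : (Fin (kk 0) → RingQuot (CRel μ)) →ₗ[RingQuot (CRel μ)] triv _ ε :=
    homInv _ ε 1 (fun _ => 1)
  have hp : ∀ v : Fin 1 → RingQuot (CRel μ), p v = (trivC _ ε).symm (ε (v 0)) := by
    intro v
    show (trivC _ ε).symm (∑ i, ε (v i) * 1) = _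
    simp
  have hM0 : ∀ w : Fin 3 → RingQuot (CRel μ),
      (Matrix.vecMul w (!![ee μ 0; ee μ 1; ee μ 2] : Matrix (Fin 3) (Fin 1) _)) 0 =
        w 0 * ee μ 0 + w 1 * ee μ 1 + w 2 * ee μ 2 := by
    intro w
    simp [Matrix.vecMul, dotProduct, Fin.sum_univ_three]
  have hsurj : Function.Surjective p := by
    intro c
    refine ⟨fun _ => algebraMap ℂ _ (trivC _ ε c), ?_⟩
    refine (hp _).trans ?_
    simp
  have hp0 : ∀ w, p (Matrix.vecMul w (MM μ (ee μ 0) (ee μ 1) (ee μ 2) 0)) = 0 := by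
    intro w
    refine (hp _).trans ?_
    refine (congrArg (fun r => (trivC _ ε).symm (ε r)) (hM0 w)).trans ?_
    simp [hε]
  have hp1 : ∀ v, p v = 0 → ∃ w, Matrix.vecMul w (MM μ (ee μ 0) (ee μ 1) (ee μ 2) 0) = v := by
    intro v hv
    have hv' := (hp _).symm.trans hv
    rw [EmbeddingLike.map_eq_zero_iff] at hv'
    obtain ⟨s, t, u, h⟩ := reg4 μ ε hε _ hv'
    refine ⟨(![s, t, u] : Fin 3 → RingQuot (CRel μ)), ?_⟩
    funext i
    obtain rfl : i = (0 : Fin 1) := Subsingleton.elim (α := Fin 1) _ _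
    exact (hM0 _).trans h.symm
  have hsq := MM_sq hxy (rel_xz μ) (rel_yz μ)
  have hex := MM_exact hxy (rel_xz μ) (rel_yz μ) (reg1 μ) (reg2 μ) (reg3 μ)
  exact ⟨extDim_zero _ ε kk _ hsq hex p hsurj hp0 hp1,
    extDim_succ _ ε kk _ hsq hex p hsurj hp0 hp1⟩

theorem betti_numbers (μ : ℂ) (hμ : μ ≠ 0) (ε : RingQuot (CRel μ) →ₐ[ℂ] ℂ)
    (hε : ∀ i : Fin 3, ε (RingQuot.mkAlgHom ℂ (CRel μ) (ι ℂ i)) = 0) :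
    (μ ≠ -1 →
      extDim (RingQuot (CRel μ)) ε 0 = 1 ∧ extDim (RingQuot (CRel μ)) ε 1 = 1 ∧
      ∀ n ≥ 2, extDim (RingQuot (CRel μ)) ε n = 0) ∧
    (μ = -1 →
      extDim (RingQuot (CRel μ)) ε 0 = 1 ∧ extDim (RingQuot (CRel μ)) ε 1 = 1 ∧
      extDim (RingQuot (CRel μ)) ε 2 = 1 ∧ extDim (RingQuot (CRel μ)) ε 3 = 1 ∧
      ∀ n ≥ 4, extDim (RingQuot (CRel μ)) ε n = 0) := by
  replace hε : ∀ i, ε (ee μ i) = 0 := hε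
  obtain ⟨d0, d⟩ := ext_dims μ ε hε
  have r0 := rank_M0 (μ := μ) ε (hε 0) (hε 1) (hε 2)
  have r1 := rank_M1 (μ := μ) ε (hε 0) (hε 1) (hε 2) hμ
  have r3 := fun n => rank_M3 (μ := μ) (x := ee μ 0) (y := ee μ 1) (z := ee μ 2) ε n
  have d1 : _ = 3 := d 0
  have d2 : _ = 3 := d 1
  have d3 : _ = 1 := d 2
  have d4 : ∀ n, _ = 0 := fun n => d (n + 3)
  have big : ∀ n ≥ 4, extDim (RingQuot (CRel μ)) ε n = 0 := by
    intro n hn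
    obtain ⟨m, rfl⟩ := Nat.exists_eq_add_of_le' hn
    have h4 := d4 m
    have : extDim (RingQuot (CRel μ)) ε (m + 3 + 1) = 0 := by omega
    exact this
  rw [r0] at d0 d1
  simp only [zero_add, Nat.reduceAdd] at d1 d2 d3 r1
  rw [r1] at d1 d2
  have r30 := r3 0
  rw [r30] at d3
  constructor
  · intro h
    have r2 := rank_M2 (μ := μ) ε (hε 0) (hε 1) (hε 2) h
    rw [r2] at d2 d3
    refine ⟨by omega, by omega, fun n hn => ?_⟩
    by_cases h4 : 4 ≤ n
    · exact big n h4
    · interval_cases n <;> omega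
  · intro h
    have r2 := rank_M2' (μ := μ) ε (hε 0) (hε 1) (hε 2) h
    rw [r2] at d2 d3
    exact ⟨by omega, by omega, by omega, by omega, big⟩
end
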